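/- arXiv:2105.02307 — 11 statements merged into one kernel-verified Lean document; each statement's English description precedes it below -/
import Mathlib

section
/- The topological interior of P contains exactly one lattice point, namely the origin: interior(P) ∩ ℤ³ = {(0,0,0)}. (In other words, P is a canonical Fano polytope.) -/
/-!
All ten vertices have coordinates in `{-1, 0, 1}`, so `P` lies in the cube `[-1, 1]³`, whose
interior `(-1, 1)³` has the origin as its only lattice point (`Ppoly_subset_cube`). Conversely,
`±e₁ = ±(a - d)/2`, `±e₂ = ±(c - e)/2` and `±e₃ = ±(a + d)/2` all lie in `P`, hence so does the
cube of half-side `1/3` around the origin (`ball_subset_Ppoly`), and the origin is an interior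
point.
-/

/-- The polytope `P`: convex hull of `±a, ±b, ±c, ±d, ±e` in `ℝ³`. -/
noncomputable def Ppoly : Set (Fin 3 → ℝ) :=
  convexHull ℝ {![1, 0, 1], ![1, 1, 1], ![0, 1, 1], ![(-1 : ℝ), 0, 1], ![0, (-1 : ℝ), 1],
    ![(-1 : ℝ), 0, -1], ![(-1 : ℝ), (-1 : ℝ), -1], ![0, (-1 : ℝ), -1], ![1, 0, (-1 : ℝ)],
    ![0, 1, (-1 : ℝ)]}

theorem Ppoly_subset_cube : Ppoly ⊆ Set.pi Set.univ fun _ : Fin 3 => Set.Icc (-1 : ℝ) 1 := by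
  have hcube : Convex ℝ (Set.pi Set.univ fun _ : Fin 3 => Set.Icc (-1 : ℝ) 1) :=
    convex_pi fun _ _ => convex_Icc _ _
  refine convexHull_min ?_ hcube
  intro x hx i _
  simp only [Set.mem_insert_iff, Set.mem_singleton_iff] at hx
  rcases hx with rfl | rfl | rfl | rfl | rfl | rfl | rfl | rfl | rfl | rfl <;>
    fin_cases i <;> norm_num

theorem smul_mem_of_mem_of_neg_mem {E : Type*} [AddCommGroup E] [Module ℝ E] {s : Set E}
    (hs : Convex ℝ s) {u : E} (hu : u ∈ s) (hu' : -u ∈ s) {t : ℝ} (ht : |t| ≤ 1) :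
    t • u ∈ s := by
  obtain ⟨h1, h2⟩ := abs_le.mp ht
  have h := hs hu hu' (a := (1 + t) / 2) (b := (1 - t) / 2) (by linarith) (by linarith) (by ring)
  convert h using 1
  module

theorem convex_Ppoly : Convex ℝ Ppoly := by
  unfold Ppoly
  exact convex_convexHull ℝ _

theorem midpoint_mem_Ppoly {u v w : Fin 3 → ℝ} (hu : u ∈ Ppoly) (hv : v ∈ Ppoly)
    (h : w = (1 / 2 : ℝ) • u + (1 / 2 : ℝ) • v) : w ∈ Ppoly :=
  h ▸ convex_Ppoly hu hv (by norm_num) (by norm_num) (by norm_num)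

/-- The ball is for the sup norm, so it is the open cube of half-side `1/3`. -/
theorem ball_subset_Ppoly : Metric.ball (0 : Fin 3 → ℝ) (1 / 3) ⊆ Ppoly := by
  have hP := convex_Ppoly
  have ha : (![1, 0, 1] : Fin 3 → ℝ) ∈ Ppoly := subset_convexHull ℝ _ (by simp)
  have hc : (![0, 1, 1] : Fin 3 → ℝ) ∈ Ppoly := subset_convexHull ℝ _ (by simp)
  have hd : (![-1, 0, 1] : Fin 3 → ℝ) ∈ Ppoly := subset_convexHull ℝ _ (by simp)
  have he : (![0, -1, 1] : Fin 3 → ℝ) ∈ Ppoly := subset_convexHull ℝ _ (by simp)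
  have ha' : (![-1, 0, -1] : Fin 3 → ℝ) ∈ Ppoly := subset_convexHull ℝ _ (by simp)
  have hc' : (![0, -1, -1] : Fin 3 → ℝ) ∈ Ppoly := subset_convexHull ℝ _ (by simp)
  have hd' : (![1, 0, -1] : Fin 3 → ℝ) ∈ Ppoly := subset_convexHull ℝ _ (by simp)
  have he' : (![0, 1, -1] : Fin 3 → ℝ) ∈ Ppoly := subset_convexHull ℝ _ (by simp)
  have e1 : (![1, 0, 0] : Fin 3 → ℝ) ∈ Ppoly :=
    midpoint_mem_Ppoly ha hd' (by ext i; fin_cases i <;> norm_num)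
  have e1' : -(![1, 0, 0] : Fin 3 → ℝ) ∈ Ppoly :=
    midpoint_mem_Ppoly ha' hd (by ext i; fin_cases i <;> norm_num)
  have e2 : (![0, 1, 0] : Fin 3 → ℝ) ∈ Ppoly :=
    midpoint_mem_Ppoly hc he' (by ext i; fin_cases i <;> norm_num)
  have e2' : -(![0, 1, 0] : Fin 3 → ℝ) ∈ Ppoly :=
    midpoint_mem_Ppoly hc' he (by ext i; fin_cases i <;> norm_num)
  have e3 : (![0, 0, 1] : Fin 3 → ℝ) ∈ Ppoly :=
    midpoint_mem_Ppoly ha hd (by ext i; fin_cases i <;> norm_num)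
  have e3' : -(![0, 0, 1] : Fin 3 → ℝ) ∈ Ppoly :=
    midpoint_mem_Ppoly ha' hd' (by ext i; fin_cases i <;> norm_num)
  intro x hx
  have hb : ∀ i, |3 * x i| ≤ 1 := fun i => by
    have h1 := norm_le_pi_norm x i
    have h2 : ‖x‖ < 1 / 3 := by simpa using hx
    rw [Real.norm_eq_abs] at h1
    rw [abs_mul, abs_of_pos (by norm_num : (0 : ℝ) < 3)]
    linarith
  have m1 := smul_mem_of_mem_of_neg_mem hP e1 e1' (hb 0)
  have m2 := smul_mem_of_mem_of_neg_mem hP e2 e2' (hb 1)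
  have m3 := smul_mem_of_mem_of_neg_mem hP e3 e3' (hb 2)
  -- `x` is the barycenter of the three points `3 xᵢ eᵢ`, taken here two at a time.
  have m12 := hP m1 m2 (a := 1 / 2) (b := 1 / 2) (by norm_num) (by norm_num) (by norm_num)
  have m := hP m12 m3 (a := 2 / 3) (b := 1 / 3) (by norm_num) (by norm_num) (by norm_num)
  convert m using 1
  ext i
  fin_cases i <;> simp <;> ring

/-- The interior of `P` contains exactly one lattice point, namely the origin. -/
theorem stmt_0 :
    interior Ppoly ∩ {x : Fin 3 → ℝ | ∀ i, ∃ z : ℤ, x i = (z : ℝ)} = {0} := by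
  refine Set.Subset.antisymm ?_ ?_
  · rintro x ⟨hx, hz⟩
    have h := interior_mono Ppoly_subset_cube hx
    rw [interior_pi_set Set.finite_univ] at h
    ext i
    obtain ⟨z, hzi⟩ := hz i
    have hi := h i (Set.mem_univ i)
    rw [interior_Icc, hzi] at hi
    obtain ⟨h1, h2⟩ := hi
    have h1' : -1 < z := by exact_mod_cast h1
    have h2' : z < 1 := by exact_mod_cast h2
    have h0 : z = 0 := by omega
    simp [hzi, h0]
  · rintro _ rfl
    refine ⟨interior_maximal ball_subset_Ppoly Metric.isOpen_ball ?_, fun i => ⟨0, by simp⟩⟩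
    exact Metric.mem_ball_self (by norm_num)
end

section
/- The polar polytope of P equals Q; that is, {m ∈ ℝ³ : ⟨m, n⟩ ≤ 1 for all n ∈ P} = Q. -/
/-- The polytope `Q`: convex hull of the ten indicated points in `ℝ³`. -/
noncomputable def Qpoly : Set (Fin 3 → ℝ) :=
  convexHull ℝ {![1, 0, 0], ![(-1 : ℝ), 0, 0], ![0, 1, 0], ![0, (-1 : ℝ), 0], ![0, 0, 1],
    ![0, 0, (-1 : ℝ)], ![1, (-1 : ℝ), 0], ![(-1 : ℝ), 1, 0],
    ![(2 : ℝ)/3, (2 : ℝ)/3, -(1 : ℝ)/3], ![-(2 : ℝ)/3, -(2 : ℝ)/3, (1 : ℝ)/3]}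

/-- A convex set containing the origin contains every nonnegative combination of three of its
points whose coefficients have sum at most `1`. -/
lemma comb_mem {C : Set (Fin 3 → ℝ)} (hC : Convex ℝ C) (h0 : (0 : Fin 3 → ℝ) ∈ C)
    {u v w p : Fin 3 → ℝ} (hu : u ∈ C) (hv : v ∈ C) (hw : w ∈ C) (α β γ : ℝ)
    (hα : 0 ≤ α) (hβ : 0 ≤ β) (hγ : 0 ≤ γ) (hs : α + β + γ ≤ 1)
    (hp : p = α • u + β • v + γ • w) : p ∈ C := by
  have h := hC.sum_mem (t := Finset.univ) (w := ![α, β, γ, 1 - (α + β + γ)])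
    (z := ![u, v, w, 0])
    (by intro i _; fin_cases i <;> simp <;> linarith)
    (by simp [Fin.sum_univ_four])
    (by intro i _; fin_cases i <;> simpa)
  simpa [Fin.sum_univ_four, hp] using h

/-- The half `z ≥ 0` of the polar of `P` is covered by cones over the generators of `Q`. The set
`C` is kept general so that the lemma also applies to `-Q`. -/
lemma mem_of_upper_half {C : Set (Fin 3 → ℝ)} (hC : Convex ℝ C)
    (e1 : ![1, 0, 0] ∈ C) (e1' : ![-1, 0, 0] ∈ C) (e2 : ![0, 1, 0] ∈ C) (e2' : ![0, -1, 0] ∈ C)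
    (e3 : ![0, 0, 1] ∈ C) (f : ![1, -1, 0] ∈ C) (f' : ![-1, 1, 0] ∈ C)
    (g : ![-2 / 3, -2 / 3, 1 / 3] ∈ C) (x y z : ℝ) (hz : 0 ≤ z)
    (h1 : x + z ≤ 1) (h2 : y + z ≤ 1) (h3 : z - x ≤ 1) (h4 : z - y ≤ 1)
    (h5 : x + y + z ≤ 1) (h6 : -1 ≤ x + y + z) : ![x, y, z] ∈ C := by
  have h0 : (0 : Fin 3 → ℝ) ∈ C := by
    have h := hC e1 e1' (a := 1 / 2) (b := 1 / 2) (by norm_num) (by norm_num) (by norm_num)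
    have hz0 : (0 : Fin 3 → ℝ) = ![0, 0, 0] := by ext i; fin_cases i <;> rfl
    rw [hz0]
    simpa using h
  rcases le_total 0 x with hx | hx <;> rcases le_total 0 y with hy | hy
  · refine comb_mem hC h0 e1 e2 e3 x y z hx hy hz h5 ?_
    ext i; fin_cases i <;> simp
  · rcases le_total x (-y) with h | h
    · refine comb_mem hC h0 f e2' e3 x (-y - x) z hx (by linarith) hz (by linarith) ?_
      ext i; fin_cases i <;> simp
    · refine comb_mem hC h0 f e1 e3 (-y) (x + y) z (by linarith) (by linarith) hz (by linarith) ?_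
      ext i; fin_cases i <;> simp
  · rcases le_total y (-x) with h | h
    · refine comb_mem hC h0 f' e1' e3 y (-x - y) z hy (by linarith) hz (by linarith) ?_
      ext i; fin_cases i <;> simp
    · refine comb_mem hC h0 f' e2 e3 (-x) (x + y) z (by linarith) (by linarith) hz (by linarith) ?_
      ext i; fin_cases i <;> simp
  · by_cases hxz : -x ≤ 2 * z ∧ y ≤ x
    · refine comb_mem hC h0 g e2' e3 (-3 * x / 2) (x - y) (z + x / 2) (by linarith)
        (by linarith) (by linarith) (by linarith) ?_
      ext i; fin_cases i <;> simp <;> ring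
    by_cases hyz : -y ≤ 2 * z ∧ x ≤ y
    · refine comb_mem hC h0 g e1' e3 (-3 * y / 2) (y - x) (z + y / 2) (by linarith)
        (by linarith) (by linarith) (by linarith) ?_
      ext i; fin_cases i <;> simp <;> ring
    -- Here `2 * z` is at most `|x|` and `|y|`: the generator with `z = 1 / 3` supplies all of `z`.
    have hX : 2 * z ≤ -x ∧ 2 * z ≤ -y := by grind
    refine comb_mem hC h0 g e1' e2' (3 * z) (-x - 2 * z) (-y - 2 * z) (by linarith)
      (by linarith) (by linarith) (by linarith) ?_
    ext i; fin_cases i <;> simp <;> ring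

/-- The polarity inequality on two convex hulls follows from the one on their generators. -/
lemma polar_of_vertices {S T : Set (Fin 3 → ℝ)}
    (h : ∀ m ∈ S, ∀ n ∈ T, ∑ i, m i * n i ≤ 1) :
    ∀ m ∈ convexHull ℝ S, ∀ n ∈ convexHull ℝ T, ∑ i, m i * n i ≤ 1 := by
  have hT : ∀ m ∈ S, ∀ n ∈ convexHull ℝ T, ∑ i, m i * n i ≤ 1 := fun m hm n hn =>
    convexHull_min (t := {n : Fin 3 → ℝ | ∑ i, m i * n i ≤ 1}) (h m hm)
      (convex_halfSpace_le (f := fun n : Fin 3 → ℝ => ∑ i, m i * n i)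
        ⟨fun a b => by simp [Fin.sum_univ_three]; ring,
          fun c a => by simp [Fin.sum_univ_three]; ring⟩ 1) hn
  intro m hm n hn
  exact convexHull_min (t := {m : Fin 3 → ℝ | ∑ i, m i * n i ≤ 1}) (fun m hm => hT m hm n hn)
      (convex_halfSpace_le (f := fun m : Fin 3 → ℝ => ∑ i, m i * n i)
        ⟨fun a b => by simp [Fin.sum_univ_three]; ring,
          fun c a => by simp [Fin.sum_univ_three]; ring⟩ 1) hm

/-- The polar polytope of `P` equals `Q`. -/
theorem stmt_1 :
    {m : Fin 3 → ℝ | ∀ n ∈ Ppoly, ∑ i, m i * n i ≤ 1} = Qpoly := by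
  apply Set.Subset.antisymm
  · intro m hm
    have hP : ∀ n : Fin 3 → ℝ, n ∈ (_ : Set (Fin 3 → ℝ)) → ∑ i, m i * n i ≤ 1 :=
      fun n hn => hm n (subset_convexHull ℝ _ hn)
    simp only [Set.mem_insert_iff, Set.mem_singleton_iff, forall_eq_or_imp, forall_eq,
      Fin.sum_univ_three] at hP
    simp at hP
    obtain ⟨p1, p2, p3, p4, p5, p6, p7, p8, p9, p10⟩ := hP
    have hC : Convex ℝ Qpoly := convex_convexHull ℝ _
    have hm3 : m = ![m 0, m 1, m 2] := by ext i; fin_cases i <;> rfl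
    rcases le_total 0 (m 2) with hz | hz
    · rw [hm3]
      apply mem_of_upper_half hC
      case hz => exact hz
      any_goals linarith
      all_goals exact subset_convexHull ℝ _ (by simp [neg_div])
    · have key : ![-m 0, -m 1, -m 2] ∈ -Qpoly := by
        apply mem_of_upper_half hC.neg
        case hz => linarith
        any_goals linarith
        all_goals
          rw [Set.mem_neg]
          exact subset_convexHull ℝ _ (by simp [neg_div])
      rw [Set.mem_neg] at key
      rw [hm3]
      simpa using key
  · refine polar_of_vertices ?_
    simp only [Set.mem_insert_iff, Set.mem_singleton_iff, forall_eq_or_imp, forall_eq,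
      Fin.sum_univ_three, Matrix.cons_val]
    norm_num
end

section
/- The set of lattice points of Q is Q ∩ ℤ³ = {(0,0,0), (1,0,0), (-1,0,0), (0,1,0), (0,-1,0), (0,0,1), (0,0,-1), (1,-1,0), (-1,1,0)}; in particular Q contains exactly 9 lattice points. -/
theorem Qpoly_bounds {x : Fin 3 → ℝ} (hx : x ∈ Qpoly) :
    (|x 0 + x 2| ≤ 1 ∧ |x 0 - x 2| ≤ 1) ∧ (|x 1 + x 2| ≤ 1 ∧ |x 1 - x 2| ≤ 1) ∧
      |x 0 + x 1| ≤ 4 / 3 := by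
  let S : Set (Fin 3 → ℝ) := {x | (|x 0 + x 2| ≤ 1 ∧ |x 0 - x 2| ≤ 1) ∧
    (|x 1 + x 2| ≤ 1 ∧ |x 1 - x 2| ≤ 1) ∧ |x 0 + x 1| ≤ 4 / 3}
  have hS : Convex ℝ S := by
    -- A linear functional bounded in absolute value by `c` at `u` and `v` is so bounded between.
    have key : ∀ {a b c u v : ℝ}, 0 ≤ a → 0 ≤ b → a + b = 1 → |u| ≤ c → |v| ≤ c →
        |a * u + b * v| ≤ c := by
      intro a b c u v ha hb hab hu hv
      rw [abs_le] at *
      have hb' : b = 1 - a := by linarith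
      subst hb'
      constructor <;> nlinarith
    rintro p ⟨⟨p1, p2⟩, ⟨p3, p4⟩, p5⟩ q ⟨⟨q1, q2⟩, ⟨q3, q4⟩, q5⟩ a b ha hb hab
    simp only [S, Set.mem_ofPred_eq, Pi.add_apply, Pi.smul_apply, smul_eq_mul]
    refine ⟨⟨?_, ?_⟩, ⟨?_, ?_⟩, ?_⟩
    · convert key ha hb hab p1 q1 using 2; ring
    · convert key ha hb hab p2 q2 using 2; ring
    · convert key ha hb hab p3 q3 using 2; ring
    · convert key ha hb hab p4 q4 using 2; ring
    · convert key ha hb hab p5 q5 using 2; ring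
  refine convexHull_min (t := S) ?_ hS hx
  intro p hp
  simp only [Set.mem_insert_iff, Set.mem_singleton_iff] at hp
  rcases hp with rfl | rfl | rfl | rfl | rfl | rfl | rfl | rfl | rfl | rfl <;>
    simp [S, abs_le] <;> norm_num

theorem Qpoly_zero_mem : (![0, 0, 0] : Fin 3 → ℝ) ∈ Qpoly := by
  have h1 : (![1, 0, 0] : Fin 3 → ℝ) ∈ Qpoly := subset_convexHull ℝ _ (by simp)
  have h2 : (![-1, 0, 0] : Fin 3 → ℝ) ∈ Qpoly := subset_convexHull ℝ _ (by simp)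
  have h := (convex_convexHull ℝ _ : Convex ℝ Qpoly) h1 h2
    (a := 1 / 2) (b := 1 / 2) (by norm_num) (by norm_num) (by norm_num)
  have e : (![0, 0, 0] : Fin 3 → ℝ) = (1 / 2 : ℝ) • ![1, 0, 0] + (1 / 2 : ℝ) • ![-1, 0, 0] := by
    ext i; fin_cases i <;> simp
  rw [e]
  exact h

theorem Qpoly_lattice :
    Qpoly ∩ {x : Fin 3 → ℝ | ∀ i, ∃ z : ℤ, x i = (z : ℝ)} =
      {![0, 0, 0], ![1, 0, 0], ![(-1 : ℝ), 0, 0], ![0, 1, 0], ![0, (-1 : ℝ), 0],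
        ![0, 0, 1], ![0, 0, (-1 : ℝ)], ![1, (-1 : ℝ), 0], ![(-1 : ℝ), 1, 0]} := by
  ext x
  constructor
  · rintro ⟨hQ, hZ⟩
    obtain ⟨a, ha⟩ := hZ 0
    obtain ⟨b, hb⟩ := hZ 1
    obtain ⟨c, hc⟩ := hZ 2
    have hB := Qpoly_bounds hQ
    simp only [ha, hb, hc, abs_le] at hB
    obtain ⟨⟨⟨h1, h2⟩, h3, h4⟩, ⟨⟨h5, h6⟩, h7, h8⟩, h9, h10⟩ := hB
    have hx : x = ![(a : ℝ), (b : ℝ), (c : ℝ)] := by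
      ext i; fin_cases i <;> simp [ha, hb, hc]
    -- By integrality, the bound `4/3` on `|a + b|` may be replaced by `1`.
    have h9' : -2 < a + b := by
      have : (-2 : ℝ) < a + b := by linarith
      exact_mod_cast this
    have h10' : a + b < 2 := by
      have : (a + b : ℝ) < 2 := by linarith
      exact_mod_cast this
    clear h9 h10 ha hb hc
    norm_cast at h1 h2 h3 h4 h5 h6 h7 h8
    have hcases : (a = 0 ∧ b = 0 ∧ c = 0) ∨ (a = 1 ∧ b = 0 ∧ c = 0) ∨ (a = -1 ∧ b = 0 ∧ c = 0) ∨
        (a = 0 ∧ b = 1 ∧ c = 0) ∨ (a = 0 ∧ b = -1 ∧ c = 0) ∨ (a = 0 ∧ b = 0 ∧ c = 1) ∨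
        (a = 0 ∧ b = 0 ∧ c = -1) ∨ (a = 1 ∧ b = -1 ∧ c = 0) ∨ (a = -1 ∧ b = 1 ∧ c = 0) := by
      have hc1 : -1 ≤ c := by omega
      have hc2 : c ≤ 1 := by omega
      have ha1 : -1 ≤ a := by omega
      have ha2 : a ≤ 1 := by omega
      interval_cases c <;> interval_cases a <;> omega
    rw [hx]
    rcases hcases with ⟨rfl, rfl, rfl⟩ | ⟨rfl, rfl, rfl⟩ | ⟨rfl, rfl, rfl⟩ | ⟨rfl, rfl, rfl⟩ |
      ⟨rfl, rfl, rfl⟩ | ⟨rfl, rfl, rfl⟩ | ⟨rfl, rfl, rfl⟩ | ⟨rfl, rfl, rfl⟩ | ⟨rfl, rfl, rfl⟩ <;>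
      simp
  · intro hx
    constructor
    · rcases hx with rfl | hx
      · exact Qpoly_zero_mem
      · apply subset_convexHull ℝ _
        simp only [Set.mem_insert_iff, Set.mem_singleton_iff] at hx ⊢
        tauto
    · have key : ∀ (a b c : ℤ) (i : Fin 3), ∃ z : ℤ, (![a, b, c] : Fin 3 → ℝ) i = z := by
        intro a b c i
        fin_cases i
        exacts [⟨a, rfl⟩, ⟨b, rfl⟩, ⟨c, rfl⟩]
      simp only [Set.mem_insert_iff, Set.mem_singleton_iff] at hx
      rcases hx with rfl | rfl | rfl | rfl | rfl | rfl | rfl | rfl | rfl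
      · simpa using key 0 0 0
      · simpa using key 1 0 0
      · simpa using key (-1) 0 0
      · simpa using key 0 1 0
      · simpa using key 0 (-1) 0
      · simpa using key 0 0 1
      · simpa using key 0 0 (-1)
      · simpa using key 1 (-1) 0
      · simpa using key (-1) 1 0

/-- `Q` contains exactly nine lattice points: the origin, `±(1,0,0)`, `±(0,1,0)`,
`±(0,0,1)` and `±(1,-1,0)`. -/
theorem stmt_2 :
    Qpoly ∩ {x : Fin 3 → ℝ | ∀ i, ∃ z : ℤ, x i = (z : ℝ)} =
      {![0, 0, 0], ![1, 0, 0], ![(-1 : ℝ), 0, 0], ![0, 1, 0], ![0, (-1 : ℝ), 0],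
        ![0, 0, 1], ![0, 0, (-1 : ℝ)], ![1, (-1 : ℝ), 0], ![(-1 : ℝ), 1, 0]} ∧
    (Qpoly ∩ {x : Fin 3 → ℝ | ∀ i, ∃ z : ℤ, x i = (z : ℝ)}).ncard = 9 := by
  refine ⟨Qpoly_lattice, ?_⟩
  rw [Qpoly_lattice]
  repeat rw [Set.ncard_insert_of_notMem]
  · rw [Set.ncard_singleton]
  all_goals norm_num [funext_iff, Fin.forall_fin_succ]
end

section
/- The Lebesgue volume of Q equals 20/9; equivalently, the normalised volume 3!·vol(Q) of Q equals 40/3. -/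
/-!
The polytope `Q` is cut out by the ten facet inequalities
`|x + y + z| ≤ 1`, `|x| + |z| ≤ 1`, `|y| + |z| ≤ 1` (`Qpoly_eq`). That these hold on `Q` is checked
at the vertices. Conversely, `Q` is a suspension with apexes `±e₃` over the closed octagonal curve
through the other eight points: the half-planes bounded by the `z`-axis through these points cut the
region into eight tetrahedra, each spanned by `±e₃` and two consecutive points of the curve
(`mem_hull_of_coeffs`), and inside a sector the barycentric coordinates are linear.

The volume is then computed by slicing at height `z`. With `a = 1 - |z| ≥ 0`, the slice is the
square `[-a, a]²` with, for `z ≥ 0`, one corner cut off by the line `x + y = a` and, when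
`z < 1/3`, the opposite corner cut off by `x + y = -1 - z`; the case `z ≤ 0` is the mirror image.
Its area is `7/2 a² - 1/2 (max 0 (1 - 3|z|))²`
(`volume_slice`). Integrating over `z ∈ [-1, 1]` gives `2 (7/6 - 1/18) = 20/9`.
-/

open MeasureTheory
open scoped ENNReal

/-- The section at height `z` of the polytope in its half-space description. -/
def Qslice (z : ℝ) : Set (ℝ × ℝ) :=
  {p | |p.1 + p.2 + z| ≤ 1 ∧ |p.1| + |z| ≤ 1 ∧ |p.2| + |z| ≤ 1}

/-- The tetrahedron spanned by `±e₃`, `p` and `q`: the hypotheses say that the point `v` has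
`(x, y)`-coordinates `l p + m q`, and that its height is compatible with weights
`(1 - l - m ± h) / 2 ≥ 0` on `±e₃`. -/
lemma mem_hull_of_coeffs {s : Set (Fin 3 → ℝ)} (hs : Convex ℝ s)
    (hn : ![0, 0, 1] ∈ s) (hm : ![0, 0, (-1 : ℝ)] ∈ s)
    {p q v : Fin 3 → ℝ} (hp : p ∈ s) (hq : q ∈ s) (l m : ℝ) (hl : 0 ≤ l) (hm0 : 0 ≤ m)
    (h0 : v 0 = l * p 0 + m * q 0) (h1 : v 1 = l * p 1 + m * q 1)
    (hu : v 2 - l * p 2 - m * q 2 ≤ 1 - l - m)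
    (hd : -(1 - l - m) ≤ v 2 - l * p 2 - m * q 2) : v ∈ s := by
  set h := v 2 - l * p 2 - m * q 2 with hh
  have key := hs.sum_mem (t := Finset.univ) (w := ![l, m, (1 - l - m + h) / 2, (1 - l - m - h) / 2])
    (z := ![p, q, ![0, 0, 1], ![0, 0, (-1 : ℝ)]])
    (by
      intro i _
      fin_cases i <;> simp <;> linarith)
    (by simp [Fin.sum_univ_four]; ring)
    (by
      intro i _
      fin_cases i <;> simpa)
  convert key using 1
  ext i
  fin_cases i <;> simp [Fin.sum_univ_four]
  · linarith
  · linarith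
  · linarith

lemma Qpoly_eq : Qpoly =
    {v | |v 0 + v 1 + v 2| ≤ 1 ∧ |v 0| + |v 2| ≤ 1 ∧ |v 1| + |v 2| ≤ 1} := by
  apply Set.Subset.antisymm
  · apply convexHull_min
    · intro v hv
      simp only [Set.mem_insert_iff, Set.mem_singleton_iff] at hv
      rcases hv with h | h | h | h | h | h | h | h | h | h <;> subst h <;>
        simp [abs_div] <;> norm_num [abs_le]
    · intro v hv w hw a b ha hb hab
      -- Each of the three constraints is a sublevel set of a sum of absolute values of linear
      -- forms, so it suffices to apply the triangle inequality termwise.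
      have tri : ∀ s t : ℝ, |a * s + b * t| ≤ a * |s| + b * |t| := fun s t => by
        simpa [abs_mul, abs_of_nonneg ha, abs_of_nonneg hb] using abs_add_le (a * s) (b * t)
      obtain ⟨v1, v2, v3⟩ := hv
      obtain ⟨w1, w2, w3⟩ := hw
      have c : ∀ s t : ℝ, s ≤ 1 → t ≤ 1 → a * s + b * t ≤ 1 := fun s t h1 h2 => by nlinarith
      simp only [Set.mem_ofPred_eq, Pi.add_apply, Pi.smul_apply, smul_eq_mul]
      refine ⟨?_, ?_, ?_⟩
      · have := tri (v 0 + v 1 + v 2) (w 0 + w 1 + w 2)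
        have := c _ _ v1 w1
        rw [show a * v 0 + b * w 0 + (a * v 1 + b * w 1) + (a * v 2 + b * w 2)
          = a * (v 0 + v 1 + v 2) + b * (w 0 + w 1 + w 2) by ring]
        linarith
      · linarith [tri (v 0) (w 0), tri (v 2) (w 2), c _ _ v2 w2]
      · linarith [tri (v 1) (w 1), tri (v 2) (w 2), c _ _ v3 w3]
  · rintro v ⟨h1, h2, h3⟩
    have hs : Convex ℝ Qpoly := convex_convexHull ℝ _
    have e : ∀ p, p ∈ ({![1, 0, 0], ![(-1 : ℝ), 0, 0], ![0, 1, 0], ![0, (-1 : ℝ), 0], ![0, 0, 1],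
        ![0, 0, (-1 : ℝ)], ![1, (-1 : ℝ), 0], ![(-1 : ℝ), 1, 0],
        ![(2 : ℝ)/3, (2 : ℝ)/3, -(1 : ℝ)/3], ![-(2 : ℝ)/3, -(2 : ℝ)/3, (1 : ℝ)/3]} :
        Set (Fin 3 → ℝ)) → p ∈ Qpoly := fun p hp => subset_convexHull ℝ _ hp
    have en := e ![0, 0, 1] (by simp)
    have em := e ![0, 0, (-1 : ℝ)] (by simp)
    have a1 := e ![1, 0, 0] (by simp)
    have a2 := e ![(2 : ℝ)/3, (2 : ℝ)/3, -(1 : ℝ)/3] (by simp)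
    have a3 := e ![0, 1, 0] (by simp)
    have a4 := e ![(-1 : ℝ), 1, 0] (by simp)
    have a5 := e ![(-1 : ℝ), 0, 0] (by simp)
    have a6 := e ![-(2 : ℝ)/3, -(2 : ℝ)/3, (1 : ℝ)/3] (by simp)
    have a7 := e ![0, (-1 : ℝ), 0] (by simp)
    have a8 := e ![1, (-1 : ℝ), 0] (by simp)
    have ⟨h1a, h1b⟩ := abs_le.1 h1
    have x1 := le_abs_self (v 0)
    have x2 := neg_abs_le (v 0)
    have y1 := le_abs_self (v 1)
    have y2 := neg_abs_le (v 1)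
    have z1 := le_abs_self (v 2)
    have z2 := neg_abs_le (v 2)
    rcases le_total 0 (v 0) with hx | hx <;> rcases le_total 0 (v 1) with hy | hy
    · rcases le_total (v 1) (v 0) with hxy | hxy
      · apply mem_hull_of_coeffs hs en em a1 a2 (v 0 - v 1) (3 / 2 * v 1) <;> first | linarith | (simp; done) | (simp; linarith)
      · apply mem_hull_of_coeffs hs en em a2 a3 (3 / 2 * v 0) (v 1 - v 0) <;> first | linarith | (simp; done) | (simp; linarith)
    · rcases le_total (v 0 + v 1) 0 with hxy | hxy
      · apply mem_hull_of_coeffs hs en em a7 a8 (-v 0 - v 1) (v 0) <;> first | linarith | (simp; done) | (simp; linarith)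
      · apply mem_hull_of_coeffs hs en em a8 a1 (-v 1) (v 0 + v 1) <;> first | linarith | (simp; done) | (simp; linarith)
    · rcases le_total (v 0 + v 1) 0 with hxy | hxy
      · apply mem_hull_of_coeffs hs en em a4 a5 (v 1) (-v 0 - v 1) <;> first | linarith | (simp; done) | (simp; linarith)
      · apply mem_hull_of_coeffs hs en em a3 a4 (v 0 + v 1) (-v 0) <;> first | linarith | (simp; done) | (simp; linarith)
    · rcases le_total (v 1) (v 0) with hxy | hxy
      · apply mem_hull_of_coeffs hs en em a6 a7 (-(3 / 2) * v 0) (v 0 - v 1) <;> first | linarith | (simp; done) | (simp; linarith)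
      · apply mem_hull_of_coeffs hs en em a5 a6 (v 1 - v 0) (-(3 / 2) * v 1) <;> first | linarith | (simp; done) | (simp; linarith)

lemma measurableSet_Qslice (z : ℝ) : MeasurableSet (Qslice z) := by
  apply IsClosed.measurableSet
  exact (isClosed_le (by fun_prop) (by fun_prop)).and
    ((isClosed_le (by fun_prop) (by fun_prop)).and (isClosed_le (by fun_prop) (by fun_prop)))

/-- The area removed from a square by a corner cut at 45 degrees, written as the integral of the
length removed from each vertical section. -/
lemma integral_posPart {b r c : ℝ} (hb : b ≤ c) (hc : c ≤ r) :
    ∫ x in b..r, max 0 (x - c) = (r - c) ^ 2 / 2 := by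
  have hi : ∀ u w : ℝ, IntervalIntegrable (fun x => max 0 (x - c)) volume u w := fun u w =>
    Continuous.intervalIntegrable (by fun_prop) _ _
  rw [← intervalIntegral.integral_add_adjacent_intervals (hi b c) (hi c r)]
  have e1 : ∫ x in b..c, max 0 (x - c) = ∫ x in b..c, (0 : ℝ) := by
    apply intervalIntegral.integral_congr
    intro x hx
    rw [Set.uIcc_of_le hb] at hx
    exact max_eq_left (by linarith [hx.2])
  have e2 : ∫ x in c..r, max 0 (x - c) = ∫ x in c..r, (x - c) := by
    apply intervalIntegral.integral_congr
    intro x hx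
    rw [Set.uIcc_of_le hc] at hx
    exact max_eq_right (by linarith [hx.1])
  rw [e1, e2, intervalIntegral.integral_sub (by simp) (by simp)]
  simp
  ring

lemma integral_sq_posPart : ∫ z in (0 : ℝ)..1, (max 0 (1 - 3 * z)) ^ 2 = 1 / 9 := by
  have hi : ∀ u w : ℝ, IntervalIntegrable (fun z : ℝ => (max 0 (1 - 3 * z)) ^ 2) volume u w :=
    fun u w => Continuous.intervalIntegrable (by fun_prop) _ _
  rw [← intervalIntegral.integral_add_adjacent_intervals (hi 0 (1 / 3)) (hi (1 / 3) 1)]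
  have e1 : ∫ z in (0 : ℝ)..(1 / 3), (max 0 (1 - 3 * z)) ^ 2
      = ∫ z in (0 : ℝ)..(1 / 3), (1 - 3 * z) ^ 2 := by
    apply intervalIntegral.integral_congr
    intro x hx
    rw [Set.uIcc_of_le (by norm_num)] at hx
    simp only
    rw [max_eq_right (by linarith [hx.2])]
  have e2 : ∫ z in (1 / 3 : ℝ)..1, (max 0 (1 - 3 * z)) ^ 2 = ∫ z in (1 / 3 : ℝ)..1, (0 : ℝ) := by
    apply intervalIntegral.integral_congr
    intro x hx
    rw [Set.uIcc_of_le (by norm_num)] at hx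
    simp only
    rw [max_eq_left (by linarith [hx.1])]
    norm_num
  rw [e1, e2, intervalIntegral.integral_comp_sub_mul (fun x => x ^ 2) (by norm_num : (3 : ℝ) ≠ 0)]
  simp
  norm_num

/-- The length of the section of the slice at a given `x`: the full length `2 (1 - z)`, shortened
by the two cut-off corners. -/
lemma volume_fiber {z : ℝ} (hz : 0 ≤ z) (x : ℝ) :
    volume (Prod.mk x ⁻¹' Qslice z) = (Set.Icc (-(1 - z)) (1 - z)).indicator
      (fun x => ENNReal.ofReal (2 * (1 - z) - max 0 x - max 0 (-x - 2 * z))) x := by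
  by_cases hx : x ∈ Set.Icc (-(1 - z)) (1 - z)
  · rw [Set.indicator_of_mem hx]
    have : Prod.mk x ⁻¹' Qslice z =
        Set.Icc (-(1 - z) + max 0 (-x - 2 * z)) ((1 - z) - max 0 x) := by
      ext y
      simp only [Qslice, Set.mem_preimage, Set.mem_ofPred_eq, Set.mem_Icc, abs_of_nonneg hz]
      have hx' : |x| + z ≤ 1 := by
        have : |x| ≤ 1 - z := abs_le.2 hx
        linarith
      constructor
      · rintro ⟨h1, -, h3⟩
        have h4 := abs_le.1 (show |y| ≤ 1 - z by linarith)
        have h5 := abs_le.1 h1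
        constructor
        · rcases max_cases 0 (-x - 2 * z) with h | h <;> linarith
        · rcases max_cases 0 x with h | h <;> linarith
      · rintro ⟨h1, h2⟩
        have m1 := le_max_left 0 x
        have m2 := le_max_right 0 x
        have m3 := le_max_left 0 (-x - 2 * z)
        have m4 := le_max_right 0 (-x - 2 * z)
        have h4 : |y| ≤ 1 - z := abs_le.2 ⟨by linarith, by linarith⟩
        exact ⟨abs_le.2 ⟨by linarith, by linarith⟩, hx', by linarith⟩
    rw [this, Real.volume_Icc]
    congr 1
    ring
  · rw [Set.indicator_of_notMem hx]
    have : Prod.mk x ⁻¹' Qslice z = ∅ := by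
      ext y
      simp only [Qslice, Set.mem_preimage, Set.mem_ofPred_eq, abs_of_nonneg hz,
        Set.mem_empty_iff_false, iff_false]
      rintro ⟨-, h, -⟩
      exact hx (abs_le.1 (show |x| ≤ 1 - z by linarith))
    rw [this, measure_empty]

lemma volume_slice_of_nonneg {z : ℝ} (hz : 0 ≤ z) (hz1 : z ≤ 1) :
    volume (Qslice z) =
      ENNReal.ofReal (7 / 2 * (1 - z) ^ 2 - (max 0 (1 - 3 * z)) ^ 2 / 2) := by
  rw [Measure.volume_eq_prod, Measure.prod_apply (measurableSet_Qslice z)]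
  simp_rw [volume_fiber hz]
  have hle : -(1 - z) ≤ 1 - z := by linarith
  have hi : ∀ f : ℝ → ℝ, Continuous f → IntervalIntegrable f volume (-(1 - z)) (1 - z) :=
    fun f hf => hf.intervalIntegrable _ _
  rw [lintegral_indicator measurableSet_Icc, ← ofReal_integral_eq_lintegral_ofReal]
  · rw [integral_Icc_eq_integral_Ioc, ← intervalIntegral.integral_of_le hle,
      intervalIntegral.integral_sub (hi _ (by fun_prop)) (hi _ (by fun_prop)),
      intervalIntegral.integral_sub (hi _ (by fun_prop)) (hi _ (by fun_prop))]
    have e1 : ∫ x in (-(1 - z))..(1 - z), max 0 x = (1 - z) ^ 2 / 2 := by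
      simpa using integral_posPart (b := -(1 - z)) (r := 1 - z) (c := 0)
        (by linarith) (by linarith)
    have e2 : ∫ x in (-(1 - z))..(1 - z), max 0 (-x - 2 * z) = (max 0 (1 - 3 * z)) ^ 2 / 2 := by
      have := intervalIntegral.integral_comp_neg (a := -(1 - z)) (b := 1 - z)
        (fun x => max 0 (x - 2 * z))
      rw [this, neg_neg]
      rcases le_total (2 * z) (1 - z) with h | h
      · rw [integral_posPart (by linarith) h, max_eq_right (by linarith)]
        ring
      · rw [max_eq_left (by linarith)]
        rw [intervalIntegral.integral_congr (g := fun _ => (0 : ℝ))]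
        · simp
        · intro x hx
          rw [Set.uIcc_of_le hle] at hx
          exact max_eq_left (by linarith [hx.2])
    rw [e1, e2, intervalIntegral.integral_const, smul_eq_mul]
    congr 1
    ring
  · exact (Continuous.continuousOn (by fun_prop)).integrableOn_compact isCompact_Icc
  · filter_upwards [ae_restrict_mem measurableSet_Icc] with x hx
    obtain ⟨h1, h2⟩ := hx
    simp only [Pi.zero_apply]
    rcases max_cases 0 x with h | h <;> rcases max_cases 0 (-x - 2 * z) with h' | h' <;> linarith

/-- The area of the slice; negative heights reduce to positive ones by central symmetry. -/
lemma volume_slice (z : ℝ) : volume (Qslice z) = (Set.Icc (-1 : ℝ) 1).indicator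
    (fun z => ENNReal.ofReal (7 / 2 * (1 - |z|) ^ 2 - (max 0 (1 - 3 * |z|)) ^ 2 / 2)) z := by
  by_cases hz : z ∈ Set.Icc (-1 : ℝ) 1
  · rw [Set.indicator_of_mem hz, ← volume_slice_of_nonneg (abs_nonneg z) (abs_le.2 hz)]
    rcases abs_choice z with h | h
    · rw [h]
    · rw [h, ← Measure.measure_neg volume (Qslice z)]
      congr 1
      ext p
      simp only [Qslice, Set.mem_neg, Set.mem_ofPred_eq, Prod.fst_neg, Prod.snd_neg, abs_neg]
      rw [← abs_neg (p.1 + p.2 + -z), show -(p.1 + p.2 + -z) = -p.1 + -p.2 + z by ring]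
  · rw [Set.indicator_of_notMem hz]
    have : Qslice z = ∅ := by
      ext p
      simp only [Qslice, Set.mem_ofPred_eq, Set.mem_empty_iff_false, iff_false]
      rintro ⟨-, h, -⟩
      exact hz (abs_le.1 (by linarith [abs_nonneg p.1]))
    rw [this, measure_empty]

lemma lintegral_volume_slice : ∫⁻ z, volume (Qslice z) = ENNReal.ofReal (20 / 9) := by
  simp_rw [volume_slice]
  rw [lintegral_indicator measurableSet_Icc, ← ofReal_integral_eq_lintegral_ofReal]
  · rw [integral_Icc_eq_integral_Ioc, ← intervalIntegral.integral_of_le (by norm_num)]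
    set f : ℝ → ℝ := fun z => 7 / 2 * (1 - z) ^ 2 - (max 0 (1 - 3 * z)) ^ 2 / 2 with hf
    have hc : Continuous f := by fun_prop
    have hi : ∀ u w : ℝ, IntervalIntegrable (fun z => f |z|) volume u w := fun u w =>
      (hc.comp continuous_abs).intervalIntegrable _ _
    have hpos : ∫ z in (0 : ℝ)..1, f |z| = 10 / 9 := by
      rw [intervalIntegral.integral_congr (g := f)]
      · rw [hf, intervalIntegral.integral_sub
          (Continuous.intervalIntegrable (by fun_prop) _ _)
          (Continuous.intervalIntegrable (by fun_prop) _ _),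
          intervalIntegral.integral_div, integral_sq_posPart, intervalIntegral.integral_const_mul,
          intervalIntegral.integral_comp_sub_left (fun x => x ^ 2)]
        simp
        norm_num
      · intro x hx
        rw [Set.uIcc_of_le (by norm_num)] at hx
        simp only [abs_of_nonneg hx.1]
    have hneg : ∫ z in (-1 : ℝ)..0, f |z| = 10 / 9 := by
      rw [← hpos]
      simpa using intervalIntegral.integral_comp_neg (a := -1) (b := 0) (fun z => f |z|)
    change ENNReal.ofReal (∫ z in (-1 : ℝ)..1, f |z|) = _
    rw [← intervalIntegral.integral_add_adjacent_intervals (hi (-1) 0) (hi 0 1), hneg, hpos]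
    norm_num
  · exact (Continuous.continuousOn (by fun_prop)).integrableOn_compact isCompact_Icc
  · filter_upwards [ae_restrict_mem measurableSet_Icc] with z hz
    have h1 : |z| ≤ 1 := abs_le.2 hz
    have h0 := abs_nonneg z
    simp only [Pi.zero_apply]
    rcases max_cases 0 (1 - 3 * |z|) with h | h <;> rw [h.1] <;> nlinarith

/-- Fubini, with the last coordinate as the outer variable. -/
lemma volume_Qpoly : volume Qpoly = ∫⁻ z, volume (Qslice z) := by
  have hcl : IsClosed {v : Fin 3 → ℝ | |v 0 + v 1 + v 2| ≤ 1 ∧ |v 0| + |v 2| ≤ 1 ∧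
      |v 1| + |v 2| ≤ 1} := by
    exact (isClosed_le (by fun_prop) (by fun_prop)).and
      ((isClosed_le (by fun_prop) (by fun_prop)).and (isClosed_le (by fun_prop) (by fun_prop)))
  have hQ : MeasurableSet Qpoly := Qpoly_eq ▸ hcl.measurableSet
  have mp := (volume_preserving_piFinSuccAbove (fun _ : Fin 3 => ℝ) 2).symm
  rw [← mp.measure_preimage hQ.nullMeasurableSet, Measure.volume_eq_prod,
    Measure.prod_apply (mp.measurable hQ)]
  congr 1
  ext z
  rw [← (volume_preserving_finTwoArrow ℝ).measure_preimage
    (measurableSet_Qslice z).nullMeasurableSet]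
  congr 1
  ext p
  have e0 : (Fin.insertNth 2 z p : Fin 3 → ℝ) 0 = p 0 := rfl
  have e1 : (Fin.insertNth 2 z p : Fin 3 → ℝ) 1 = p 1 := rfl
  simp [Qpoly_eq, Qslice, e0, e1, MeasurableEquiv.finTwoArrow]

/-- The Lebesgue volume of `Q` is `20/9`; equivalently, the normalised volume
`3! · vol(Q)` of `Q` equals `40/3`. -/
theorem stmt_3 :
    volume Qpoly = ENNReal.ofReal (20 / 9) ∧
    (Nat.factorial 3 : ℝ≥0∞) * volume Qpoly = ENNReal.ofReal (40 / 3) := by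
  have h : volume Qpoly = ENNReal.ofReal (20 / 9) :=
    volume_Qpoly.trans lintegral_volume_slice
  refine ⟨h, ?_⟩
  rw [h, ← ENNReal.ofReal_natCast, ← ENNReal.ofReal_mul (by positivity)]
  congr 1
  norm_num [Nat.factorial]
end

section
/- The intersection of Q with the horizontal plane {m ∈ ℝ³ : m₃ = 0} is the hexagon with vertices ±(1,0,0), ±(0,1,0), ±(-1,1,0); that is, {m ∈ Q : m₃ = 0} equals the convex hull of (1,0,0), (-1,0,0), (0,1,0), (0,-1,0), (-1,1,0), (1,-1,0). -/
/-- A convex set containing `0`, `u` and `v` contains the triangle they span. -/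
lemma triangle_mem {S : Set (Fin 3 → ℝ)} (hS : Convex ℝ S) {u v : Fin 3 → ℝ} (h0 : 0 ∈ S)
    (hu : u ∈ S) (hv : v ∈ S) {a b : ℝ} (ha : 0 ≤ a) (hb : 0 ≤ b) (hab : a + b ≤ 1) :
    a • u + b • v ∈ S := by
  have h := hS.sum_mem (t := Finset.univ) (w := ![a, b, 1 - a - b]) (z := ![u, v, 0])
    (by intro i _; fin_cases i <;> simp <;> linarith)
    (by simp [Fin.sum_univ_three])
    (by intro i _; fin_cases i <;> simp [h0, hu, hv])
  simpa [Fin.sum_univ_three] using h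

/-- The slab `|l| ≤ 1` of a linear form `l` is convex. -/
lemma convex_slab (l : (Fin 3 → ℝ) →ₗ[ℝ] ℝ) : Convex ℝ {m | |l m| ≤ 1} := by
  have h : {m | |l m| ≤ 1} = l ⁻¹' Set.Icc (-1) 1 := by
    ext m
    simp [abs_le]
  rw [h]
  exact (convex_Icc (-1 : ℝ) 1).linear_preimage l

/-- Three slabs containing `Q`; the third becomes `|x + y| ≤ 1` on the plane `z = 0`. -/
lemma Qpoly_subset_slabs {m : Fin 3 → ℝ} (hm : m ∈ Qpoly) :
    |m 0| ≤ 1 ∧ |m 1| ≤ 1 ∧ |m 0 + m 1 + m 2| ≤ 1 := by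
  let p : Fin 3 → ((Fin 3 → ℝ) →ₗ[ℝ] ℝ) := fun i => LinearMap.proj i
  have hc := ((convex_slab (p 0)).inter (convex_slab (p 1))).inter
    (convex_slab (p 0 + p 1 + p 2))
  have h := convexHull_min (𝕜 := ℝ) ?_ hc hm
  · simpa [p, and_assoc] using h
  · rintro x (rfl | rfl | rfl | rfl | rfl | rfl | rfl | rfl | rfl | rfl) <;>
      simp [p, abs_le] <;> norm_num

/-- The intersection of `Q` with the horizontal plane `{m₃ = 0}` is the hexagon with
vertices `±(1,0,0)`, `±(0,1,0)`, `±(-1,1,0)`. -/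
theorem stmt_4 :
    {m ∈ Qpoly | m 2 = 0} =
      convexHull ℝ {![1, 0, 0], ![(-1 : ℝ), 0, 0], ![0, 1, 0], ![0, (-1 : ℝ), 0],
        ![(-1 : ℝ), 1, 0], ![1, (-1 : ℝ), 0]} := by
  apply Set.Subset.antisymm
  · rintro m ⟨hm, hz⟩
    obtain ⟨hx, hy, hxy⟩ := Qpoly_subset_slabs hm
    rw [hz, add_zero] at hxy
    rw [abs_le] at hx hy hxy
    set V : Set (Fin 3 → ℝ) := {![1, 0, 0], ![(-1 : ℝ), 0, 0], ![0, 1, 0], ![0, (-1 : ℝ), 0],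
        ![(-1 : ℝ), 1, 0], ![1, (-1 : ℝ), 0]} with hV
    have hS : Convex ℝ (convexHull ℝ V) := convex_convexHull ℝ V
    have h1 : ![1, 0, 0] ∈ convexHull ℝ V := subset_convexHull ℝ V (by simp [hV])
    have h2 : ![(-1 : ℝ), 0, 0] ∈ convexHull ℝ V := subset_convexHull ℝ V (by simp [hV])
    have h3 : ![0, 1, 0] ∈ convexHull ℝ V := subset_convexHull ℝ V (by simp [hV])
    have h4 : ![0, (-1 : ℝ), 0] ∈ convexHull ℝ V := subset_convexHull ℝ V (by simp [hV])
    have h5 : ![(-1 : ℝ), 1, 0] ∈ convexHull ℝ V := subset_convexHull ℝ V (by simp [hV])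
    have h6 : ![1, (-1 : ℝ), 0] ∈ convexHull ℝ V := subset_convexHull ℝ V (by simp [hV])
    have h0 : (0 : Fin 3 → ℝ) ∈ convexHull ℝ V := by
      have h := hS h1 h2 (a := 1 / 2) (b := 1 / 2) (by norm_num) (by norm_num) (by norm_num)
      convert h using 1
      ext i
      fin_cases i <;> simp
    have key : ∀ u v : Fin 3 → ℝ, u ∈ convexHull ℝ V → v ∈ convexHull ℝ V → ∀ a b : ℝ,
        0 ≤ a → 0 ≤ b → a + b ≤ 1 → m 0 = a * u 0 + b * v 0 → m 1 = a * u 1 + b * v 1 →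
        0 = a * u 2 + b * v 2 → m ∈ convexHull ℝ V := by
      intro u v hu hv a b ha hb hab e0 e1 e2
      have h := triangle_mem hS h0 hu hv ha hb hab
      convert h using 1
      ext i
      fin_cases i
      · simpa using e0
      · simpa using e1
      · simpa [hz] using e2
    rcases le_total 0 (m 0) with hx0 | hx0 <;> rcases le_total 0 (m 1) with hy0 | hy0
    · apply key _ _ h1 h3 (m 0) (m 1) <;> (try simp) <;> linarith
    · rcases le_total 0 (m 0 + m 1) with hs | hs
      · apply key _ _ h1 h6 (m 0 + m 1) (-m 1) <;> (try simp) <;> linarith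
      · apply key _ _ h4 h6 (-(m 0 + m 1)) (m 0) <;> (try simp) <;> linarith
    · rcases le_total 0 (m 0 + m 1) with hs | hs
      · apply key _ _ h3 h5 (m 0 + m 1) (-m 0) <;> (try simp) <;> linarith
      · apply key _ _ h2 h5 (-(m 0 + m 1)) (m 1) <;> (try simp) <;> linarith
    · apply key _ _ h2 h4 (-m 0) (-m 1) <;> (try simp) <;> linarith
  · intro m hm
    refine ⟨convexHull_mono ?_ hm, ?_⟩
    · rintro x (rfl | rfl | rfl | rfl | rfl | rfl) <;> simp
    · have hc : Convex ℝ {m : Fin 3 → ℝ | m 2 = 0} :=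
        (convex_singleton (0 : ℝ)).linear_preimage (LinearMap.proj 2 : (Fin 3 → ℝ) →ₗ[ℝ] ℝ)
      refine convexHull_min ?_ hc hm
      rintro x (rfl | rfl | rfl | rfl | rfl | rfl) <;> simp
end

section
/- P admits the half-space description P = {n ∈ ℝ³ : |n₁| ≤ 1, |n₂| ≤ 1, |n₃| ≤ 1, |n₁ - n₂| ≤ 1, |2n₁ + 2n₂ - n₃| ≤ 3}; i.e. P is exactly the set of points of ℝ³ satisfying the ten linear inequalities ⟨m, n⟩ ≤ 1 where m ranges over the ten points (±1,0,0), (0,±1,0), (0,0,±1), ±(1,-1,0), ±(2/3,2/3,-1/3). -/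
theorem neg_mem_Ppoly {p : Fin 3 → ℝ} (hp : p ∈ Ppoly) : -p ∈ Ppoly := by
  rw [← Set.mem_neg]
  unfold Ppoly at hp ⊢
  rw [← convexHull_neg]
  refine convexHull_mono ?_ hp
  intro q hq
  rw [Set.mem_neg]
  simp only [Set.mem_insert_iff, Set.mem_singleton_iff] at hq ⊢
  rcases hq with rfl | rfl | rfl | rfl | rfl | rfl | rfl | rfl | rfl | rfl <;> simp

theorem mem_triangle {p q r : Fin 3 → ℝ} (hp : p ∈ Ppoly) (hq : q ∈ Ppoly) (hr : r ∈ Ppoly)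
    {t u v : ℝ} (ht : 0 ≤ t) (hu : 0 ≤ u) (hv : 0 ≤ v) (h : t + u + v = 1) :
    t • p + u • q + v • r ∈ Ppoly := by
  have := convex_Ppoly.sum_mem (t := Finset.univ) (w := ![t, u, v]) (z := ![p, q, r])
    (by intro i _; fin_cases i <;> simpa) (by simpa [Fin.sum_univ_three] using h)
    (by intro i _; fin_cases i <;> simpa)
  simpa [Fin.sum_univ_three] using this

/-- The part of `P` in the plane `n 0 = 1` contains the triangle with vertices `a`, `b`, `-d`; the
weights in the proof are the barycentric coordinates. -/
theorem mem_face_x {w z : ℝ} (hw : 0 ≤ w) (hwz : 2 * w ≤ 1 + z) (hz : z ≤ 1) :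
    ![1, w, z] ∈ Ppoly := by
  have ha : ![1, 0, 1] ∈ Ppoly := subset_convexHull ℝ _ (by simp)
  have hb : ![1, 1, 1] ∈ Ppoly := subset_convexHull ℝ _ (by simp)
  have hd : ![1, 0, -1] ∈ Ppoly := subset_convexHull ℝ _ (by simp)
  convert mem_triangle ha hb hd (t := (1 + z) / 2 - w) (u := w) (v := (1 - z) / 2)
    (by linarith) hw (by linarith) (by ring) using 1
  ext i
  fin_cases i <;> simp <;> ring

/-- The triangle with vertices `c`, `b`, `-e` in the plane `n 1 = 1`, the image of the triangle of
`mem_face_x` when the first two coordinates are exchanged. -/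
theorem mem_face_y {w z : ℝ} (hw : 0 ≤ w) (hwz : 2 * w ≤ 1 + z) (hz : z ≤ 1) :
    ![w, 1, z] ∈ Ppoly := by
  have hc : ![0, 1, 1] ∈ Ppoly := subset_convexHull ℝ _ (by simp)
  have hb : ![1, 1, 1] ∈ Ppoly := subset_convexHull ℝ _ (by simp)
  have he : ![0, 1, -1] ∈ Ppoly := subset_convexHull ℝ _ (by simp)
  convert mem_triangle hc hb he (t := (1 + z) / 2 - w) (u := w) (v := (1 - z) / 2)
    (by linarith) hw (by linarith) (by ring) using 1
  ext i
  fin_cases i <;> simp <;> ring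

/-- The trapezoid `1 ≤ x + y` of the slice at height `z`. -/
theorem mem_of_one_le_add {x y z : ℝ} (hx : x ≤ 1) (hy : y ≤ 1) (hz : z ≤ 1)
    (h : 2 * x + 2 * y - z ≤ 3) (hs : 1 ≤ x + y) : ![x, y, z] ∈ Ppoly := by
  have h1 : ![1, x + y - 1, z] ∈ Ppoly := mem_face_x (by linarith) (by linarith) hz
  have h2 : ![x + y - 1, 1, z] ∈ Ppoly := mem_face_y (by linarith) (by linarith) hz
  rcases eq_or_lt_of_le (show x + y ≤ 2 by linarith) with h0 | h0
  -- Here the segment degenerates to the vertex `b`.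
  · convert h1 using 2
    · linarith
    · congr 1
      linarith
  · have hpos : 0 < 2 - (x + y) := by linarith
    have hne := hpos.ne'
    convert convex_Ppoly h1 h2 (a := (1 - y) / (2 - (x + y))) (b := (1 - x) / (2 - (x + y)))
      (div_nonneg (by linarith) hpos.le) (div_nonneg (by linarith) hpos.le)
      (by field_simp; ring) using 1
    ext i
    fin_cases i <;> simp <;> field_simp <;> ring

/-- The square `|x + y| ≤ 1`, `|x - y| ≤ 1` of the slice at height `z`. -/
theorem mem_of_abs_add_le {x y z : ℝ} (hz : -1 ≤ z) (hz' : z ≤ 1)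
    (hs : -1 ≤ x + y) (hs' : x + y ≤ 1) (hd : -1 ≤ x - y) (hd' : x - y ≤ 1) :
    ![x, y, z] ∈ Ppoly := by
  have h1 : ![1, 0, z] ∈ Ppoly := mem_face_x le_rfl (by linarith) hz'
  have h2 : ![0, 1, z] ∈ Ppoly := mem_face_y le_rfl (by linarith) hz'
  have h3 : ![-1, 0, z] ∈ Ppoly := by
    simpa using neg_mem_Ppoly (mem_face_x (w := 0) (z := -z) le_rfl (by linarith) (by linarith))
  have h4 : ![0, -1, z] ∈ Ppoly := by
    simpa using neg_mem_Ppoly (mem_face_y (w := 0) (z := -z) le_rfl (by linarith) (by linarith))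
  -- The points of the sides `x + y = 1` and `x + y = -1` with the given value of `x - y`.
  have h12 := convex_Ppoly h1 h2 (a := (1 + (x - y)) / 2) (b := (1 - (x - y)) / 2)
    (by linarith) (by linarith) (by ring)
  have h43 := convex_Ppoly h4 h3 (a := (1 + (x - y)) / 2) (b := (1 - (x - y)) / 2)
    (by linarith) (by linarith) (by ring)
  convert convex_Ppoly h12 h43 (a := (1 + (x + y)) / 2) (b := (1 - (x + y)) / 2)
    (by linarith) (by linarith) (by ring) using 1
  ext i
  fin_cases i <;> simp <;> ring

/-- `P` admits the half-space description
`P = {n ∈ ℝ³ : |n₁| ≤ 1, |n₂| ≤ 1, |n₃| ≤ 1, |n₁ - n₂| ≤ 1, |2n₁ + 2n₂ - n₃| ≤ 3}`. -/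
theorem stmt_6 :
    Ppoly = {n : Fin 3 → ℝ |
      |n 0| ≤ 1 ∧ |n 1| ≤ 1 ∧ |n 2| ≤ 1 ∧ |n 0 - n 1| ≤ 1 ∧
      |2 * n 0 + 2 * n 1 - n 2| ≤ 3} := by
  apply Set.Subset.antisymm
  · refine convexHull_min ?_ ?_
    · intro q hq
      simp only [Set.mem_insert_iff, Set.mem_singleton_iff] at hq
      rcases hq with rfl | rfl | rfl | rfl | rfl | rfl | rfl | rfl | rfl | rfl <;>
        simp [abs_le] <;> norm_num
    · intro p hp q hq s t hs ht hst
      obtain rfl : t = 1 - s := by linarith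
      simp only [Set.mem_ofPred_eq, abs_le, Pi.add_apply, Pi.smul_apply, smul_eq_mul] at hp hq ⊢
      obtain ⟨⟨_, _⟩, ⟨_, _⟩, ⟨_, _⟩, ⟨_, _⟩, _, _⟩ := hp
      obtain ⟨⟨_, _⟩, ⟨_, _⟩, ⟨_, _⟩, ⟨_, _⟩, _, _⟩ := hq
      refine ⟨⟨?_, ?_⟩, ⟨?_, ?_⟩, ⟨?_, ?_⟩, ⟨?_, ?_⟩, ?_, ?_⟩ <;> nlinarith
  · intro n hn
    simp only [Set.mem_ofPred_eq, abs_le] at hn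
    obtain ⟨⟨_, _⟩, ⟨_, _⟩, ⟨_, _⟩, ⟨_, _⟩, _, _⟩ := hn
    have e : n = ![n 0, n 1, n 2] := by
      ext i
      fin_cases i <;> rfl
    rw [e]
    rcases le_total 1 (n 0 + n 1) with h | h
    · exact mem_of_one_le_add (by linarith) (by linarith) (by linarith) (by linarith) h
    rcases le_total (-1) (n 0 + n 1) with h' | h'
    · exact mem_of_abs_add_le (by linarith) (by linarith) h' h (by linarith) (by linarith)
    · simpa using neg_mem_Ppoly (mem_of_one_le_add (x := -n 0) (y := -n 1) (z := -n 2)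
        (by linarith) (by linarith) (by linarith) (by linarith) (by linarith))
end

section
/- Let R = ℂ[t₁,t₂,t₃,t₄]/(t₁², t₁t₂, t₃², t₃t₄). The kernel of the ℂ-algebra homomorphism ℂ[x₁,x₂,x₃,x₄] → R determined by x₁ ↦ [t₁t₃], x₂ ↦ [t₂t₄], x₃ ↦ [t₂t₃], x₄ ↦ [t₁t₄] is the ideal generated by x₁², x₃², x₄², x₁x₂, x₁x₃, x₁x₄, x₂x₃, x₂x₄, x₃x₄ (all degree-2 monomials except x₂²). Consequently the image of this homomorphism is isomorphic as a ℂ-algebra to ℂ[x₁,x₂,x₃,x₄]/(x₁², x₃², x₄², x₁x₂, x₁x₃, x₁x₄, x₂x₃, x₂x₄, x₃x₄). -/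
/-!
Each of the nine listed monomials goes to a multiple of `t₁²`, `t₁t₂`, `t₃²` or `t₃t₄`, so the
ideal `J` they generate lies in the kernel. Modulo `J` every polynomial has a normal form
`q(x₂) + a x₁ + b x₃ + c x₄` (`exists_normal_form`), so it remains to see that a normal form in
the kernel vanishes. An algebra homomorphism out of `ℂ[t₁,t₂,t₃,t₄]` that kills the relations
factors through `R` (`aeval_eq_zero_of_mem_ker`), and four of them suffice:
* `(t₁,t₂,t₃,t₄) ↦ (0,T,0,1)` into `ℂ[T]` detects `q`;
* `(ε,0,ε',0)` into the iterated dual numbers `ℂ[ε][ε']` detects `a`;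
* `(0,1,ε,0)` and `(ε,0,0,1)` into the dual numbers `ℂ[ε]` detect `b` and `c`.
-/

open MvPolynomial

/-- The ideal `(t₁², t₁t₂, t₃², t₃t₄)` of `ℂ[t₁,t₂,t₃,t₄]`. -/
noncomputable def Irel : Ideal (MvPolynomial (Fin 4) ℂ) :=
  Ideal.span {X 0 ^ 2, X 0 * X 1, X 2 ^ 2, X 2 * X 3}

/-- The homomorphism `ℂ[x₁,x₂,x₃,x₄] → R = ℂ[t₁,t₂,t₃,t₄]/(t₁², t₁t₂, t₃², t₃t₄)`,
`x₁ ↦ [t₁t₃]`, `x₂ ↦ [t₂t₄]`, `x₃ ↦ [t₂t₃]`, `x₄ ↦ [t₁t₄]`. -/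
noncomputable def φ₈ : MvPolynomial (Fin 4) ℂ →ₐ[ℂ] MvPolynomial (Fin 4) ℂ ⧸ Irel :=
  aeval ![Ideal.Quotient.mk Irel (X 0 * X 2), Ideal.Quotient.mk Irel (X 1 * X 3),
    Ideal.Quotient.mk Irel (X 1 * X 2), Ideal.Quotient.mk Irel (X 0 * X 3)]

/-- The ideal `J` generated by all quadratic monomials in `x₁,x₂,x₃,x₄` other than `x₂²`. -/
noncomputable def quadIdeal : Ideal (MvPolynomial (Fin 4) ℂ) :=
  Ideal.span {(X 0 ^ 2 : MvPolynomial (Fin 4) ℂ), X 2 ^ 2, X 3 ^ 2, X 0 * X 1,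
    X 0 * X 2, X 0 * X 3, X 1 * X 2, X 1 * X 3, X 2 * X 3}

/-- A point of a `ℂ`-algebra satisfying the relations of `R` gives a homomorphism out of `R`;
composing it with `φ₈` evaluates polynomials at the corresponding products. -/
lemma aeval_eq_zero_of_mem_ker {A : Type*} [CommRing A] [Algebra ℂ A] (a b c d : A)
    (h1 : a ^ 2 = 0) (h2 : a * b = 0) (h3 : c ^ 2 = 0) (h4 : c * d = 0)
    {p : MvPolynomial (Fin 4) ℂ} (hp : φ₈ p = 0) :
    aeval ![a * c, b * d, b * c, a * d] p = 0 := by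
  have hI : ∀ x ∈ Irel, aeval (R := ℂ) ![a, b, c, d] x = 0 := by
    intro x hx
    have : Irel ≤ RingHom.ker (aeval (R := ℂ) ![a, b, c, d]) := by
      rw [Irel, Ideal.span_le]
      rintro y (rfl | rfl | rfl | rfl) <;> simp [RingHom.mem_ker, h1, h2, h3, h4]
    exact this hx
  obtain ⟨g, hg⟩ : ∃ g : MvPolynomial (Fin 4) ℂ ⧸ Irel →ₐ[ℂ] A,
      ∀ x, g (Ideal.Quotient.mk Irel x) = aeval ![a, b, c, d] x :=
    ⟨Ideal.Quotient.liftₐ Irel _ hI, fun _ => rfl⟩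
  have hcomp : g.comp φ₈ = aeval ![a * c, b * d, b * c, a * d] := by
    apply MvPolynomial.algHom_ext
    intro i
    fin_cases i <;> simp [φ₈, hg]
  rw [← hcomp, AlgHom.comp_apply, hp, map_zero]

lemma quadIdeal_le_ker : quadIdeal ≤ RingHom.ker φ₈ := by
  have e1 : Ideal.Quotient.mk Irel (X 0) ^ 2 = 0 := by
    rw [← map_pow, Ideal.Quotient.eq_zero_iff_mem]
    exact Ideal.subset_span (by simp)
  have e2 : Ideal.Quotient.mk Irel (X 0) * Ideal.Quotient.mk Irel (X 1) = 0 := by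
    rw [← map_mul, Ideal.Quotient.eq_zero_iff_mem]
    exact Ideal.subset_span (by simp)
  have e3 : Ideal.Quotient.mk Irel (X 2) ^ 2 = 0 := by
    rw [← map_pow, Ideal.Quotient.eq_zero_iff_mem]
    exact Ideal.subset_span (by simp)
  have e4 : Ideal.Quotient.mk Irel (X 2) * Ideal.Quotient.mk Irel (X 3) = 0 := by
    rw [← map_mul, Ideal.Quotient.eq_zero_iff_mem]
    exact Ideal.subset_span (by simp)
  rw [quadIdeal, Ideal.span_le]
  rintro y (rfl | rfl | rfl | rfl | rfl | rfl | rfl | rfl | rfl) <;>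
    simp only [SetLike.mem_coe, RingHom.mem_ker, φ₈, map_mul, map_pow, aeval_X,
      Matrix.cons_val] <;>
    grind

/-- The defining relations of `ℂ[x₁,x₂,x₃,x₄]/J`, as equations in the quotient. -/
lemma quad_relations {x : Fin 4 → MvPolynomial (Fin 4) ℂ ⧸ quadIdeal}
    (hx : ∀ i, x i = Ideal.Quotient.mk quadIdeal (X i)) :
    x 0 ^ 2 = 0 ∧ x 2 ^ 2 = 0 ∧ x 3 ^ 2 = 0 ∧ x 0 * x 1 = 0 ∧ x 0 * x 2 = 0 ∧ x 0 * x 3 = 0 ∧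
      x 1 * x 2 = 0 ∧ x 1 * x 3 = 0 ∧ x 2 * x 3 = 0 := by
  simp only [hx, ← map_mul, ← map_pow, Ideal.Quotient.eq_zero_iff_mem]
  refine ⟨?_, ?_, ?_, ?_, ?_, ?_, ?_, ?_, ?_⟩ <;> exact Ideal.subset_span (by simp)

/-- Modulo `J` every polynomial is congruent to some `q(x₂) + a x₁ + b x₃ + c x₄`. -/
lemma exists_normal_form (p : MvPolynomial (Fin 4) ℂ) :
    ∃ (q : Polynomial ℂ) (a b c : ℂ),
      p - (Polynomial.aeval (X 1) q + C a * X 0 + C b * X 2 + C c * X 3) ∈ quadIdeal := by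
  simp only [← Ideal.Quotient.eq]
  obtain ⟨x, hx⟩ : ∃ x : Fin 4 → MvPolynomial (Fin 4) ℂ ⧸ quadIdeal,
      ∀ i, x i = Ideal.Quotient.mk quadIdeal (X i) := ⟨_, fun _ => rfl⟩
  obtain ⟨r1, r2, r3, r4, r5, r6, r7, r8, r9⟩ := quad_relations hx
  induction p using MvPolynomial.induction_on with
  | C z => exact ⟨Polynomial.C z, 0, 0, 0, by simp [MvPolynomial.algebraMap_eq]⟩
  | add p p' hp hp' =>
    obtain ⟨q, a, b, c, h⟩ := hp
    obtain ⟨q', a', b', c', h'⟩ := hp'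
    refine ⟨q + q', a + a', b + b', c + c', ?_⟩
    rw [map_add, h, h', ← map_add]
    congr 1
    simp only [map_add]
    ring
  | mul_X p i hp =>
    obtain ⟨q, a, b, c, h⟩ := hp
    -- Splitting off the constant term of `q` shows that `q(x₂) xᵢ ≡ q(0) xᵢ` for `xᵢ ≠ x₂`.
    have hq := Polynomial.divX_mul_X_add q
    generalize q.divX = s at hq
    generalize q.coeff 0 = z at hq
    subst hq
    suffices hs : Ideal.Quotient.mk quadIdeal
        ((Polynomial.aeval (X 1) (s * Polynomial.X + Polynomial.C z) + C a * X 0 + C b * X 2 +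
          C c * X 3) * X i) =
        Ideal.Quotient.mk quadIdeal (Polynomial.aeval (X 1)
          (if i = 1 then (s * Polynomial.X + Polynomial.C z) * Polynomial.X else 0) +
          C (if i = 0 then z else 0) * X 0 + C (if i = 2 then z else 0) * X 2 +
          C (if i = 3 then z else 0) * X 3) from
      ⟨_, _, _, _, by rw [map_mul, h, ← map_mul, hs]⟩
    fin_cases i <;>
      simp [MvPolynomial.algebraMap_eq, ← hx] <;>
      grind

/-- The images of the powers of `x₂` and of `x₁`, `x₃`, `x₄` are linearly independent in `R`. -/
lemma normal_form_eq_zero {q : Polynomial ℂ} {a b c : ℂ}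
    (h : φ₈ (Polynomial.aeval (X 1) q + C a * X 0 + C b * X 2 + C c * X 3) = 0) :
    q = 0 ∧ a = 0 ∧ b = 0 ∧ c = 0 := by
  have hq : q = 0 := by
    have := aeval_eq_zero_of_mem_ker (A := Polynomial ℂ) 0 Polynomial.X 0 1
      (by simp) (by simp) (by simp) (by simp) h
    simpa [← Polynomial.aeval_algHom_apply] using this
  subst hq
  refine ⟨rfl, ?_, ?_, ?_⟩
  · have := aeval_eq_zero_of_mem_ker (A := DualNumber (DualNumber ℂ))
      (TrivSqZeroExt.inl DualNumber.eps) 0 DualNumber.eps 0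
      (by rw [pow_two, ← TrivSqZeroExt.inl_mul]; simp) (by simp) (by simp [pow_two]) (by simp) h
    have := congrArg (fun y => TrivSqZeroExt.snd (TrivSqZeroExt.snd y)) this
    simpa [TrivSqZeroExt.algebraMap_eq_inl'] using this
  · have := aeval_eq_zero_of_mem_ker (A := DualNumber ℂ) 0 1 DualNumber.eps 0
      (by simp) (by simp) (by simp [pow_two]) (by simp) h
    simpa [TrivSqZeroExt.algebraMap_eq_inl'] using congrArg TrivSqZeroExt.snd this
  · have := aeval_eq_zero_of_mem_ker (A := DualNumber ℂ) DualNumber.eps 0 0 1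
      (by simp [pow_two]) (by simp) (by simp) (by simp) h
    simpa [TrivSqZeroExt.algebraMap_eq_inl'] using congrArg TrivSqZeroExt.snd this

lemma ker_eq_quadIdeal : RingHom.ker φ₈ = quadIdeal := by
  refine le_antisymm (fun p hp => ?_) quadIdeal_le_ker
  obtain ⟨q, a, b, c, h⟩ := exists_normal_form p
  have h0 := RingHom.mem_ker.mp (quadIdeal_le_ker h)
  rw [map_sub, RingHom.mem_ker.mp hp, zero_sub, neg_eq_zero] at h0
  obtain ⟨rfl, rfl, rfl, rfl⟩ := normal_form_eq_zero h0
  simpa using h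

/-- The kernel of `φ₈` is generated by all degree-2 monomials in `x₁,x₂,x₃,x₄` except
`x₂²`; consequently the image of `φ₈` is isomorphic to the quotient of
`ℂ[x₁,x₂,x₃,x₄]` by that ideal. -/
theorem stmt_8 :
    RingHom.ker φ₈ =
      Ideal.span {(X 0 ^ 2 : MvPolynomial (Fin 4) ℂ), X 2 ^ 2, X 3 ^ 2, X 0 * X 1,
        X 0 * X 2, X 0 * X 3, X 1 * X 2, X 1 * X 3, X 2 * X 3} ∧
    Nonempty
      ((MvPolynomial (Fin 4) ℂ ⧸
          Ideal.span {(X 0 ^ 2 : MvPolynomial (Fin 4) ℂ), X 2 ^ 2, X 3 ^ 2, X 0 * X 1,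
            X 0 * X 2, X 0 * X 3, X 1 * X 2, X 1 * X 3, X 2 * X 3}) ≃ₐ[ℂ] φ₈.range) := by
  exact ⟨ker_eq_quadIdeal, ⟨(Ideal.quotientEquivAlgOfEq ℂ ker_eq_quadIdeal.symm).trans
    (Ideal.quotientKerEquivRange φ₈)⟩⟩
end

section
/- The subalgebra of ℂ[t₁,t₂,t₃,t₄] consisting of all polynomials p with ψ_λ(p) = p for every λ ∈ ℂˣ equals the ℂ-subalgebra generated by the four monomials t₁t₃, t₂t₄, t₂t₃, t₁t₄. -/
open MvPolynomial

/-- For `λ ∈ ℂˣ`, the endomorphism `ψ_λ` of `ℂ[t₁,t₂,t₃,t₄]` determined by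
`t₁ ↦ λt₁`, `t₂ ↦ λt₂`, `t₃ ↦ λ⁻¹t₃`, `t₄ ↦ λ⁻¹t₄`. -/
noncomputable def ψ (l : ℂˣ) : MvPolynomial (Fin 4) ℂ →ₐ[ℂ] MvPolynomial (Fin 4) ℂ :=
  aeval ![(l : ℂ) • X 0, (l : ℂ) • X 1, ((l⁻¹ : ℂˣ) : ℂ) • X 2, ((l⁻¹ : ℂˣ) : ℂ) • X 3]

/-!
Each `ψ l` is diagonal in the monomial basis: it scales the monomial with exponent `d` by
`l ^ (d 0 + d 1) * l⁻¹ ^ (d 2 + d 3)` (`coeff_ψ`). Already invariance under `ψ 2` therefore forces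
every monomial occurring in `p` to be balanced, i.e. `d 0 + d 1 = d 2 + d 3`, because `2` is not a
root of unity. A balanced monomial is a product of generators: pair off, one at a time, a variable
among `X 0, X 1` with one among `X 2, X 3` (`monomial_mem`). Conversely the generators are
visibly fixed, and the fixed points of an algebra homomorphism form a subalgebra.
-/

lemma monomial_eq_four (d : Fin 4 →₀ ℕ) (c : ℂ) :
    monomial d c = c • (X 0 ^ d 0 * X 1 ^ d 1 * X 2 ^ d 2 * X 3 ^ d 3 :
      MvPolynomial (Fin 4) ℂ) := by
  rw [monomial_eq, Finsupp.prod_fintype _ _ (by simp), Fin.prod_univ_four, smul_eq_C_mul]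

lemma ψ_monomial (l : ℂˣ) (d : Fin 4 →₀ ℕ) (c : ℂ) :
    ψ l (monomial d c) =
      ((l : ℂ) ^ (d 0 + d 1) * ((l⁻¹ : ℂˣ) : ℂ) ^ (d 2 + d 3)) • monomial d c := by
  rw [monomial_eq_four]
  rw [map_smul]
  simp only [ψ, map_mul, map_pow, aeval_X, Matrix.cons_val, smul_eq_C_mul]
  ring

lemma coeff_ψ (l : ℂˣ) (d : Fin 4 →₀ ℕ) (p : MvPolynomial (Fin 4) ℂ) :
    coeff d (ψ l p) =
      ((l : ℂ) ^ (d 0 + d 1) * ((l⁻¹ : ℂˣ) : ℂ) ^ (d 2 + d 3)) * coeff d p := by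
  classical
  induction p using MvPolynomial.induction_on' with
  | monomial e c =>
    rw [ψ_monomial, coeff_smul, coeff_monomial]
    split_ifs with h
    · rw [h, smul_eq_mul]
    · simp
  | add p q hp hq => rw [map_add, coeff_add, hp, hq, coeff_add, mul_add]

lemma balanced_of_coeff_ne_zero {p : MvPolynomial (Fin 4) ℂ} (hp : ∀ l : ℂˣ, ψ l p = p)
    {d : Fin 4 →₀ ℕ} (hd : coeff d p ≠ 0) : d 0 + d 1 = d 2 + d 3 := by
  have h := coeff_ψ (Units.mk0 2 two_ne_zero) d p
  rw [hp, eq_comm, mul_eq_right₀ hd, Units.val_inv_eq_inv_val, Units.val_mk0, inv_pow,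
    mul_inv_eq_one₀ (pow_ne_zero _ two_ne_zero)] at h
  exact Nat.pow_right_injective le_rfl (by exact_mod_cast h)

lemma monomial_mem (n a b c e : ℕ) (hab : a + b = n) (hce : c + e = n) :
    (X 0 ^ a * X 1 ^ b * X 2 ^ c * X 3 ^ e : MvPolynomial (Fin 4) ℂ) ∈
      Algebra.adjoin ℂ
        {(X 0 * X 2 : MvPolynomial (Fin 4) ℂ), X 1 * X 3, X 1 * X 2, X 0 * X 3} := by
  have h (q : MvPolynomial (Fin 4) ℂ)
      (hq : q ∈ ({X 0 * X 2, X 1 * X 3, X 1 * X 2, X 0 * X 3} : Set (MvPolynomial (Fin 4) ℂ))) :=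
    Algebra.subset_adjoin (R := ℂ) hq
  induction n generalizing a b c e with
  | zero =>
    obtain ⟨rfl, rfl⟩ : a = 0 ∧ b = 0 := by omega
    obtain ⟨rfl, rfl⟩ : c = 0 ∧ e = 0 := by omega
    simp
  | succ n ih =>
    rcases a with _ | a
    · obtain ⟨b, rfl⟩ : ∃ k, b = k + 1 := ⟨b - 1, by omega⟩
      rcases c with _ | c
      · obtain ⟨e, rfl⟩ : ∃ k, e = k + 1 := ⟨e - 1, by omega⟩
        convert mul_mem (ih 0 b 0 e (by omega) (by omega))
          (h (X 1 * X 3) (by simp)) using 1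
        ring
      · convert mul_mem (ih 0 b c e (by omega) (by omega))
          (h (X 1 * X 2) (by simp)) using 1
        ring
    · rcases c with _ | c
      · obtain ⟨e, rfl⟩ : ∃ k, e = k + 1 := ⟨e - 1, by omega⟩
        convert mul_mem (ih a b 0 e (by omega) (by omega))
          (h (X 0 * X 3) (by simp)) using 1
        ring
      · convert mul_mem (ih a b c e (by omega) (by omega))
          (h (X 0 * X 2) (by simp)) using 1
        ring

/-- The torus-invariant subalgebra of `ℂ[t₁,t₂,t₃,t₄]` is generated by the four
monomials `t₁t₃`, `t₂t₄`, `t₂t₃`, `t₁t₄`. -/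
theorem stmt_9 :
    {p : MvPolynomial (Fin 4) ℂ | ∀ l : ℂˣ, ψ l p = p} =
      ↑(Algebra.adjoin ℂ
        {(X 0 * X 2 : MvPolynomial (Fin 4) ℂ), X 1 * X 3, X 1 * X 2, X 0 * X 3}) := by
  ext p
  constructor
  · intro hp
    rw [SetLike.mem_coe, p.as_sum]
    refine sum_mem fun d hd => ?_
    rw [monomial_eq_four]
    exact Subalgebra.smul_mem _ (monomial_mem _ _ _ _ _ rfl
      (balanced_of_coeff_ne_zero hp (mem_support_iff.mp hd)).symm) _
  · intro hp l
    have hle : Algebra.adjoin ℂ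
        {(X 0 * X 2 : MvPolynomial (Fin 4) ℂ), X 1 * X 3, X 1 * X 2, X 0 * X 3} ≤
        AlgHom.equalizer (ψ l) (AlgHom.id ℂ _) := by
      refine Algebra.adjoin_le ?_
      rintro q (rfl | rfl | rfl | rfl) <;>
        simp [ψ, smul_smul]
    exact hle hp
end

section
/- Let R = ℂ[t₁,t₂,t₃,t₄]/(t₁², t₁t₂, t₃², t₃t₄). The kernel of the ℂ-algebra homomorphism ℂ[y₁,y₂,y₃,y₄] → R determined by y₁ ↦ [t₁t₃], y₂ ↦ [t₂t₄], y₃ ↦ [t₂t₃ + t₁t₄], y₄ ↦ [t₁t₂t₃t₄] is the ideal generated by y₁², y₁y₂, y₄, y₃², y₁y₃, y₂y₃. Consequently the image of this homomorphism is isomorphic as a ℂ-algebra to ℂ[y₁,y₂,y₃]/(y₁², y₃², y₁y₂, y₁y₃, y₂y₃). -/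
/-!
Modulo `J = (y₁², y₁y₂, y₄, y₃², y₁y₃, y₂y₃)` every polynomial is congruent to a normal form
`a y₁ + b y₃ + q(y₂)` with `a b : ℂ` and `q` a univariate polynomial (`exists_normalForm`).
The generators of `J` are killed by `φ₁₁`, so `J ≤ ker φ₁₁`, and equality holds as soon as a
normal form sent to `0` has `a = b = 0` and `q = 0` (`normalForm_eq_zero`). This is detected by
three homomorphisms out of `R = ℂ[t₁,t₂,t₃,t₄]/Irel`, given by their values on `(t₁, t₂, t₃, t₄)`:
`(0, X, 0, 1)` in `ℂ[X]` sees `q`, `(0, 1, ε, 0)` in the dual numbers sees `b`, and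
`(ε, 0, δ, 0)` in `ℂ[δ, ε]/(δ², ε²)` sees `a`.

For the image, let `A = ℂ[y₁,y₂,y₃]/(y₁², y₃², y₁y₂, y₁y₃, y₂y₃)`. The surjection
`ℂ[y₁,y₂,y₃,y₄] → A` with `y₄ ↦ 0` kills `J`, and `φ₁₁` factors through it, so its kernel
lies between `J` and `ker φ₁₁ = J`. Hence `A` and the image of `φ₁₁` are both
`ℂ[y₁,y₂,y₃,y₄]/J`.
-/

open MvPolynomial

/-- The homomorphism `ℂ[y₁,y₂,y₃,y₄] → R = ℂ[t₁,t₂,t₃,t₄]/(t₁², t₁t₂, t₃², t₃t₄)`,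
`y₁ ↦ [t₁t₃]`, `y₂ ↦ [t₂t₄]`, `y₃ ↦ [t₂t₃ + t₁t₄]`, `y₄ ↦ [t₁t₂t₃t₄]`. -/
noncomputable def φ₁₁ : MvPolynomial (Fin 4) ℂ →ₐ[ℂ] MvPolynomial (Fin 4) ℂ ⧸ Irel :=
  aeval ![Ideal.Quotient.mk Irel (X 0 * X 2), Ideal.Quotient.mk Irel (X 1 * X 3),
    Ideal.Quotient.mk Irel (X 1 * X 2 + X 0 * X 3),
    Ideal.Quotient.mk Irel (X 0 * X 1 * X 2 * X 3)]

/-- The ideal `(y₁², y₁y₂, y₄, y₃², y₁y₃, y₂y₃)` of `ℂ[y₁,y₂,y₃,y₄]`. -/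
noncomputable def J₄ : Ideal (MvPolynomial (Fin 4) ℂ) :=
  Ideal.span {(X 0 ^ 2 : MvPolynomial (Fin 4) ℂ), X 0 * X 1, X 3, X 2 ^ 2,
    X 0 * X 2, X 1 * X 2}

/-- The ideal `(y₁², y₃², y₁y₂, y₁y₃, y₂y₃)` of `ℂ[y₁,y₂,y₃]`. -/
noncomputable def J₃ : Ideal (MvPolynomial (Fin 3) ℂ) :=
  Ideal.span {(X 0 ^ 2 : MvPolynomial (Fin 3) ℂ), X 2 ^ 2, X 0 * X 1,
    X 0 * X 2, X 1 * X 2}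

/-- The normal form `a y₁ + b y₃ + q(y₂)`. -/
noncomputable def normalForm (a b : ℂ) (q : Polynomial ℂ) : MvPolynomial (Fin 4) ℂ :=
  C a * X 0 + C b * X 2 + Polynomial.aeval (X 1) q

theorem J₄_le_ker {A : Type*} [CommRing A] [Algebra ℂ A] (f : MvPolynomial (Fin 4) ℂ →ₐ[ℂ] A)
    (h00 : f (X 0) ^ 2 = 0) (h01 : f (X 0) * f (X 1) = 0) (h3 : f (X 3) = 0)
    (h22 : f (X 2) ^ 2 = 0) (h02 : f (X 0) * f (X 2) = 0) (h12 : f (X 1) * f (X 2) = 0) :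
    J₄ ≤ RingHom.ker f := by
  rw [J₄, Ideal.span_le]
  rintro x (rfl | rfl | rfl | rfl | rfl | rfl) <;> simp [RingHom.mem_ker, *]

/-- Multiplying `q(y)` by some `x` with `x * y = 0` leaves only the constant term of `q`. -/
theorem mul_aeval_of_mul_eq_zero {A : Type*} [CommRing A] [Algebra ℂ A] {x y : A}
    (h : x * y = 0) (q : Polynomial ℂ) :
    x * Polynomial.aeval y q = algebraMap ℂ A (q.coeff 0) * x := by
  conv_lhs => rw [← Polynomial.divX_mul_X_add q]
  simp only [map_add, map_mul, Polynomial.aeval_X, Polynomial.aeval_C]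
  linear_combination (Polynomial.aeval y q.divX) * h

theorem exists_normalForm (p : MvPolynomial (Fin 4) ℂ) :
    ∃ a b q, Ideal.Quotient.mkₐ ℂ J₄ p = Ideal.Quotient.mkₐ ℂ J₄ (normalForm a b q) := by
  set π := Ideal.Quotient.mkₐ ℂ J₄ with hπ
  have mem : ∀ x ∈ ({(X 0 ^ 2 : MvPolynomial (Fin 4) ℂ), X 0 * X 1, X 3, X 2 ^ 2,
      X 0 * X 2, X 1 * X 2} : Set _), π x = 0 := fun x hx =>
    Ideal.Quotient.eq_zero_iff_mem.2 (Ideal.subset_span hx)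
  have h00 : π (X 0) * π (X 0) = 0 := by rw [← map_mul, ← sq]; exact mem _ (by simp)
  have h01 : π (X 0) * π (X 1) = 0 := by rw [← map_mul]; exact mem _ (by simp)
  have h3 : π (X 3) = 0 := mem _ (by simp)
  have h22 : π (X 2) * π (X 2) = 0 := by rw [← map_mul, ← sq]; exact mem _ (by simp)
  have h02 : π (X 0) * π (X 2) = 0 := by rw [← map_mul]; exact mem _ (by simp)
  have h12 : π (X 1) * π (X 2) = 0 := by rw [← map_mul]; exact mem _ (by simp)
  have hC (c : ℂ) : π (C c) = algebraMap ℂ _ c := π.commutes c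
  have hN (a b : ℂ) (q : Polynomial ℂ) : π (normalForm a b q) = algebraMap ℂ _ a * π (X 0) +
      algebraMap ℂ _ b * π (X 2) + Polynomial.aeval (π (X 1)) q := by
    rw [normalForm, map_add, map_add, map_mul, map_mul, hC, hC, Polynomial.aeval_algHom_apply]
  simp only [hN]
  clear_value π
  induction p using MvPolynomial.induction_on with
  | C c => exact ⟨0, 0, Polynomial.C c, by simp [hC]⟩
  | add p p' hp hp' =>
    obtain ⟨a, b, q, h⟩ := hp
    obtain ⟨a', b', q', h'⟩ := hp'
    refine ⟨a + a', b + b', q + q', ?_⟩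
    simp only [map_add, h, h']
    ring
  | mul_X p i hp =>
    obtain ⟨a, b, q, h⟩ := hp
    rw [map_mul, h]
    have e0 := mul_aeval_of_mul_eq_zero h01 q
    have e2 := mul_aeval_of_mul_eq_zero (mul_comm (π (X 1)) _ ▸ h12) q
    fin_cases i
    · refine ⟨q.coeff 0, 0, 0, ?_⟩
      simp only [Fin.zero_eta, map_zero]
      linear_combination algebraMap ℂ _ a * h00 + algebraMap ℂ _ b * h02 + e0
    · refine ⟨0, 0, q * Polynomial.X, ?_⟩
      simp only [Fin.mk_one, map_zero, map_mul, Polynomial.aeval_X]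
      linear_combination algebraMap ℂ _ a * h01 + algebraMap ℂ _ b * h12
    · refine ⟨0, q.coeff 0, 0, ?_⟩
      simp only [Fin.reduceFinMk, map_zero]
      linear_combination algebraMap ℂ _ a * h02 + algebraMap ℂ _ b * h22 + e2
    · refine ⟨0, 0, 0, ?_⟩
      simp [h3]

/-- A point `(t₁, t₂, t₃, t₄)` of a `ℂ`-algebra satisfying the relations `Irel` defines a
homomorphism out of `R`; so an element of `ker φ₁₁` vanishes at the induced values of the `yᵢ`. -/
theorem aeval_eq_zero_of_mem_ker_s11 {A : Type*} [CommRing A] [Algebra ℂ A] (t₁ t₂ t₃ t₄ : A)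
    (h1 : t₁ ^ 2 = 0) (h12 : t₁ * t₂ = 0) (h3 : t₃ ^ 2 = 0) (h34 : t₃ * t₄ = 0)
    {p : MvPolynomial (Fin 4) ℂ} (hp : φ₁₁ p = 0) :
    aeval ![t₁ * t₃, t₂ * t₄, t₂ * t₃ + t₁ * t₄, t₁ * t₂ * t₃ * t₄] p = 0 := by
  have hI : ∀ x ∈ Irel, aeval ![t₁, t₂, t₃, t₄] x = 0 := by
    intro x hx
    change x ∈ RingHom.ker (aeval ![t₁, t₂, t₃, t₄])
    refine (Ideal.span_le.2 ?_ : Irel ≤ _) hx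
    rintro x (rfl | rfl | rfl | rfl) <;> simp [RingHom.mem_ker, *]
  have hl (x) : Ideal.Quotient.liftₐ Irel (aeval ![t₁, t₂, t₃, t₄]) hI
      (Ideal.Quotient.mk Irel x) = aeval ![t₁, t₂, t₃, t₄] x := rfl
  have key : (Ideal.Quotient.liftₐ Irel (aeval ![t₁, t₂, t₃, t₄]) hI).comp φ₁₁ =
      aeval ![t₁ * t₃, t₂ * t₄, t₂ * t₃ + t₁ * t₄, t₁ * t₂ * t₃ * t₄] := by
    ext i
    rw [AlgHom.comp_apply, φ₁₁, aeval_X, aeval_X]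
    fin_cases i <;> exact (hl _).trans (by simp)
  rw [← key, AlgHom.comp_apply, hp, map_zero]

theorem normalForm_eq_zero {a b : ℂ} {q : Polynomial ℂ} (h : φ₁₁ (normalForm a b q) = 0) :
    normalForm a b q = 0 := by
  have hq : q = 0 := by
    have := aeval_eq_zero_of_mem_ker_s11 (0 : Polynomial ℂ) Polynomial.X 0 1
      (by simp) (by simp) (by simp) (by simp) h
    simpa [normalForm, ← Polynomial.aeval_algHom_apply] using this
  subst hq
  have hb : b = 0 := by
    have := aeval_eq_zero_of_mem_ker_s11 (0 : DualNumber ℂ) 1 DualNumber.eps 0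
      (by simp) (by simp) (by simp [sq]) (by simp) h
    simpa [normalForm, TrivSqZeroExt.algebraMap_eq_inl] using congrArg TrivSqZeroExt.snd this
  subst hb
  have ha : a = 0 := by
    have := aeval_eq_zero_of_mem_ker_s11 (DualNumber.eps : DualNumber (DualNumber ℂ)) 0
      (TrivSqZeroExt.inl DualNumber.eps) 0
      (by simp [sq]) (by simp) (by simp [sq, ← TrivSqZeroExt.inl_mul]) (by simp) h
    simpa [normalForm, TrivSqZeroExt.algebraMap_eq_inl'] using congrArg (fun x => x.snd.snd) this
  simp [normalForm, ha]

theorem J₄_le_ker_φ₁₁ : J₄ ≤ RingHom.ker φ₁₁ := by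
  have mem : ∀ x ∈ ({X 0 ^ 2, X 0 * X 1, X 2 ^ 2, X 2 * X 3} : Set (MvPolynomial (Fin 4) ℂ)),
      Ideal.Quotient.mk Irel x = 0 := fun x hx =>
    Ideal.Quotient.eq_zero_iff_mem.2 (Ideal.subset_span hx)
  have h1 := mem (X 0 ^ 2) (by simp)
  have h12 := mem (X 0 * X 1) (by simp)
  have h3 := mem (X 2 ^ 2) (by simp)
  have h34 := mem (X 2 * X 3) (by simp)
  simp only [map_mul, map_pow] at h1 h12 h3 h34
  generalize e0 : Ideal.Quotient.mk Irel (X 0) = t₁ at *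
  generalize e1 : Ideal.Quotient.mk Irel (X 1) = t₂ at *
  generalize e2 : Ideal.Quotient.mk Irel (X 2) = t₃ at *
  generalize e3 : Ideal.Quotient.mk Irel (X 3) = t₄ at *
  have f0 : φ₁₁ (X 0) = t₁ * t₃ := by simp [φ₁₁, *]
  have f1 : φ₁₁ (X 1) = t₂ * t₄ := by simp [φ₁₁, *]
  have f2 : φ₁₁ (X 2) = t₂ * t₃ + t₁ * t₄ := by simp [φ₁₁, *]
  have f3 : φ₁₁ (X 3) = t₁ * t₂ * t₃ * t₄ := by simp [φ₁₁, *]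
  apply J₄_le_ker <;> simp only [f0, f1, f2, f3]
  · linear_combination t₃ ^ 2 * h1
  · linear_combination t₃ * t₄ * h12
  · linear_combination t₃ * t₄ * h12
  · linear_combination t₂ ^ 2 * h3 + 2 * t₃ * t₄ * h12 + t₄ ^ 2 * h1
  · linear_combination t₁ * t₂ * h3 + t₃ * t₄ * h1
  · linear_combination t₂ ^ 2 * h34 + t₄ ^ 2 * h12

theorem ker_φ₁₁ : RingHom.ker φ₁₁ = J₄ := by
  refine le_antisymm (fun p hp => ?_) J₄_le_ker_φ₁₁
  obtain ⟨a, b, q, h⟩ := exists_normalForm p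
  have hsub : p - normalForm a b q ∈ J₄ := Ideal.Quotient.eq.1 h
  have h0 : φ₁₁ (p - normalForm a b q) = 0 := J₄_le_ker_φ₁₁ hsub
  rw [map_sub, show φ₁₁ p = 0 from hp, zero_sub, neg_eq_zero] at h0
  rwa [normalForm_eq_zero h0, sub_zero] at hsub

/-- The projection `ℂ[y₁,y₂,y₃,y₄] → ℂ[y₁,y₂,y₃]/J₃` sending `y₄` to `0`. -/
noncomputable def θ : MvPolynomial (Fin 4) ℂ →ₐ[ℂ] MvPolynomial (Fin 3) ℂ ⧸ J₃ :=
  (Ideal.Quotient.mkₐ ℂ J₃).comp (aeval ![X 0, X 1, X 2, 0])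

theorem θ_surjective : Function.Surjective θ := by
  refine (Ideal.Quotient.mkₐ_surjective ℂ J₃).comp fun p => ⟨rename Fin.castSucc p, ?_⟩
  have : ((![X 0, X 1, X 2, 0] : Fin 4 → MvPolynomial (Fin 3) ℂ) ∘ Fin.castSucc) = X := by
    ext1 i
    fin_cases i <;> rfl
  change aeval _ (rename _ p) = p
  rw [aeval_rename, this, aeval_X_left_apply]

theorem ker_θ : RingHom.ker θ = J₄ := by
  apply le_antisymm
  · have f (x) (hx : x ∈ J₄) : φ₁₁ x = 0 := J₄_le_ker_φ₁₁ hx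
    have hJ : ∀ x ∈ J₃, ((φ₁₁.comp (rename Fin.castSucc)) : _ →ₐ[ℂ] _) x = 0 := by
      intro x hx
      change x ∈ RingHom.ker (φ₁₁.comp (rename Fin.castSucc))
      refine (Ideal.span_le.2 ?_ : J₃ ≤ _) hx
      rintro x (rfl | rfl | rfl | rfl | rfl) <;>
        refine f _ (Ideal.subset_span ?_) <;> simp
    have hl (x) : Ideal.Quotient.liftₐ J₃ (φ₁₁.comp (rename Fin.castSucc)) hJ
        (Ideal.Quotient.mkₐ ℂ J₃ x) = φ₁₁ (rename Fin.castSucc x) := rfl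
    have key : (Ideal.Quotient.liftₐ J₃ (φ₁₁.comp (rename Fin.castSucc)) hJ).comp θ = φ₁₁ := by
      ext i
      rw [AlgHom.comp_apply, θ, AlgHom.comp_apply, aeval_X]
      fin_cases i
      · exact (hl _).trans (by simp)
      · exact (hl _).trans (by simp)
      · exact (hl _).trans (by simp)
      · exact (hl _).trans ((map_zero _).trans (f (X 3) (Ideal.subset_span (by simp))).symm)
    intro p hp
    rw [← ker_φ₁₁, RingHom.mem_ker, ← key, AlgHom.comp_apply, show θ p = 0 from hp, map_zero]
  · have mem : ∀ x ∈ ({(X 0 ^ 2 : MvPolynomial (Fin 3) ℂ), X 2 ^ 2, X 0 * X 1,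
        X 0 * X 2, X 1 * X 2} : Set _), Ideal.Quotient.mk J₃ x = 0 := fun x hx =>
      Ideal.Quotient.eq_zero_iff_mem.2 (Ideal.subset_span hx)
    have e0 : θ (X 0) = Ideal.Quotient.mk J₃ (X 0) := by simp [θ]
    have e1 : θ (X 1) = Ideal.Quotient.mk J₃ (X 1) := by simp [θ]
    have e2 : θ (X 2) = Ideal.Quotient.mk J₃ (X 2) := by simp [θ]
    have e3 : θ (X 3) = 0 := by simp [θ]
    apply J₄_le_ker <;> simp only [e0, e1, e2, e3, ← map_mul, ← map_pow]
    · exact mem _ (by simp)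
    · exact mem _ (by simp)
    · exact mem _ (by simp)
    · exact mem _ (by simp)
    · exact mem _ (by simp)

/-- The kernel of `φ₁₁` is the ideal `(y₁², y₁y₂, y₄, y₃², y₁y₃, y₂y₃)`; consequently
the image of `φ₁₁` is isomorphic to `ℂ[y₁,y₂,y₃]/(y₁², y₃², y₁y₂, y₁y₃, y₂y₃)`. -/
theorem stmt_11 :
    RingHom.ker φ₁₁ =
      Ideal.span {(X 0 ^ 2 : MvPolynomial (Fin 4) ℂ), X 0 * X 1, X 3, X 2 ^ 2,
        X 0 * X 2, X 1 * X 2} ∧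
    Nonempty
      ((MvPolynomial (Fin 3) ℂ ⧸
          Ideal.span {(X 0 ^ 2 : MvPolynomial (Fin 3) ℂ), X 2 ^ 2, X 0 * X 1,
            X 0 * X 2, X 1 * X 2}) ≃ₐ[ℂ] φ₁₁.range) := by
  refine ⟨ker_φ₁₁, ⟨?_⟩⟩
  exact (Ideal.quotientKerAlgEquivOfSurjective θ_surjective).symm.trans
    ((Ideal.quotientEquivAlgOfEq ℂ (ker_θ.trans ker_φ₁₁.symm)).trans
      (Ideal.quotientKerEquivRange φ₁₁))
end

section
/- The kernel of the ℂ-algebra homomorphism from the polynomial ring ℂ[z₁,z₂,z₃,z₄] to the polynomial ring ℂ[t₅,t₆,t₇,t₈] determined by z₁ ↦ t₅²t₆, z₂ ↦ t₅t₇, z₃ ↦ t₇²t₈, z₄ ↦ t₆t₈ is the principal ideal generated by z₁z₃ - z₂²z₄. -/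
/-!
Both rings have bases of monomials and the homomorphism `φ` sends the monomial with exponent
vector `a` to the one with exponent vector
`(2 a₀ + a₁, a₀ + a₃, a₁ + 2 a₂, a₂ + a₃)`.  Modulo `I = (z₁z₃ - z₂²z₄)` every monomial is
congruent to its normal form, obtained by trading `min a₀ a₂` factors `z₁z₃` for `z₂²z₄`.
The exponents of the normal form can be read off from the image exponents `e`: they are
`((e₀ - e₂)/2, min e₀ e₂, (e₂ - e₀)/2, min e₁ e₃)` with truncated subtraction.  Sending the
monomial `e` to the class of this normal form therefore gives a linear map `retract` with
`retract ∘ φ` equal to the quotient map (`retract_aeval`), so the kernel of `φ` is contained in `I`.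
The reverse inclusion is a direct computation.
-/

/-- In a commutative ring with `x z = y² w`, the monomial `x^a y^b z^c w^d`
equals its normal form, whose exponents are written in terms of the exponents of the image monomial. -/
theorem monomial_normal_form {R : Type*} [CommRing R] {x y z w : R} (h : x * z = y ^ 2 * w)
    (a b c d : ℕ) :
    x ^ ((2 * a + b - (b + 2 * c)) / 2) * y ^ min (2 * a + b) (b + 2 * c) *
      z ^ ((b + 2 * c - (2 * a + b)) / 2) * w ^ min (a + d) (c + d) =
    x ^ a * y ^ b * z ^ c * w ^ d := by
  rcases le_total c a with hca | hac
  · obtain ⟨k, rfl⟩ := Nat.exists_eq_add_of_le hca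
    have h1 : (2 * (c + k) + b - (b + 2 * c)) / 2 = k := by omega
    have h2 : min (2 * (c + k) + b) (b + 2 * c) = b + 2 * c := by omega
    have h3 : (b + 2 * c - (2 * (c + k) + b)) / 2 = 0 := by omega
    have h4 : min (c + k + d) (c + d) = c + d := by omega
    rw [h1, h2, h3, h4]
    calc _ = x ^ k * y ^ b * w ^ d * (y ^ 2 * w) ^ c := by ring
      _ = x ^ k * y ^ b * w ^ d * (x * z) ^ c := by rw [h]
      _ = _ := by ring
  · obtain ⟨k, rfl⟩ := Nat.exists_eq_add_of_le hac
    have h1 : (2 * a + b - (b + 2 * (a + k))) / 2 = 0 := by omega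
    have h2 : min (2 * a + b) (b + 2 * (a + k)) = b + 2 * a := by omega
    have h3 : (b + 2 * (a + k) - (2 * a + b)) / 2 = k := by omega
    have h4 : min (a + d) (a + k + d) = a + d := by omega
    rw [h1, h2, h3, h4]
    calc _ = z ^ k * y ^ b * w ^ d * (y ^ 2 * w) ^ a := by ring
      _ = z ^ k * y ^ b * w ^ d * (x * z) ^ a := by rw [h]
      _ = _ := by ring

/-- The linear map out of the target ring sending the monomial with exponents `e` to the normal
form monomial, evaluated at `x` in an algebra `R`.  On exponents outside the image of the monomial
map the value is irrelevant. -/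
noncomputable def retract {R : Type*} [CommRing R] [Algebra ℂ R] (x : Fin 4 → R) :
    MvPolynomial (Fin 4) ℂ →ₗ[ℂ] R :=
  (MvPolynomial.basisMonomials (Fin 4) ℂ).constr ℂ fun e =>
    x 0 ^ ((e 0 - e 2) / 2) * x 1 ^ min (e 0) (e 2) * x 2 ^ ((e 2 - e 0) / 2) *
      x 3 ^ min (e 1) (e 3)

theorem retract_monomial {R : Type*} [CommRing R] [Algebra ℂ R] (x : Fin 4 → R)
    (e : Fin 4 →₀ ℕ) :
    retract x (MvPolynomial.monomial e 1) =
      x 0 ^ ((e 0 - e 2) / 2) * x 1 ^ min (e 0) (e 2) * x 2 ^ ((e 2 - e 0) / 2) *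
        x 3 ^ min (e 1) (e 3) := by
  rw [← congrFun (MvPolynomial.coe_basisMonomials (Fin 4) ℂ) e, retract,
    Module.Basis.constr_basis]

theorem monomial_fin_four (e : Fin 4 →₀ ℕ) :
    (MvPolynomial.monomial e 1 : MvPolynomial (Fin 4) ℂ) =
      MvPolynomial.X 0 ^ e 0 * MvPolynomial.X 1 ^ e 1 * MvPolynomial.X 2 ^ e 2 *
        MvPolynomial.X 3 ^ e 3 := by
  rw [MvPolynomial.monomial_eq, Finsupp.prod_fintype _ _ (by simp), Fin.prod_univ_four]
  simp

/-- If the point `x` satisfies the relation `x₀ x₂ = x₁² x₃`, evaluation at `x` factors linearly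
through the monomial homomorphism. -/
theorem retract_aeval {R : Type*} [CommRing R] [Algebra ℂ R] (x : Fin 4 → R)
    (h : x 0 * x 2 = x 1 ^ 2 * x 3) (p : MvPolynomial (Fin 4) ℂ) :
    retract x (MvPolynomial.aeval ![(MvPolynomial.X 0 ^ 2 * MvPolynomial.X 1 :
        MvPolynomial (Fin 4) ℂ), MvPolynomial.X 0 * MvPolynomial.X 2,
        MvPolynomial.X 2 ^ 2 * MvPolynomial.X 3, MvPolynomial.X 1 * MvPolynomial.X 3] p) =
      MvPolynomial.aeval x p := by
  set φ : MvPolynomial (Fin 4) ℂ →ₐ[ℂ] MvPolynomial (Fin 4) ℂ :=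
    MvPolynomial.aeval ![(MvPolynomial.X 0 ^ 2 * MvPolynomial.X 1 :
        MvPolynomial (Fin 4) ℂ), MvPolynomial.X 0 * MvPolynomial.X 2,
        MvPolynomial.X 2 ^ 2 * MvPolynomial.X 3, MvPolynomial.X 1 * MvPolynomial.X 3] with hφ
  suffices H : (retract x).comp φ.toLinearMap = (MvPolynomial.aeval x).toLinearMap from
    LinearMap.congr_fun H p
  refine (MvPolynomial.basisMonomials (Fin 4) ℂ).ext fun a => ?_
  have key : φ (MvPolynomial.monomial a 1) = MvPolynomial.monomial
      (Finsupp.equivFunOnFinite.symm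
        ![2 * a 0 + a 1, a 0 + a 3, a 1 + 2 * a 2, a 2 + a 3]) 1 := by
    rw [monomial_fin_four a, monomial_fin_four]
    simp [hφ]
    ring
  simp only [MvPolynomial.coe_basisMonomials, LinearMap.comp_apply, AlgHom.toLinearMap_apply]
  rw [key, retract_monomial, monomial_fin_four]
  simpa using monomial_normal_form h (a 0) (a 1) (a 2) (a 3)

open MvPolynomial

/-- The kernel of `ℂ[z₁,z₂,z₃,z₄] → ℂ[t₅,t₆,t₇,t₈]`, `z₁ ↦ t₅²t₆`, `z₂ ↦ t₅t₇`,
`z₃ ↦ t₇²t₈`, `z₄ ↦ t₆t₈`, is the principal ideal generated by `z₁z₃ - z₂²z₄`. -/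
theorem stmt_13 :
    RingHom.ker
      (aeval ![(X 0 ^ 2 * X 1 : MvPolynomial (Fin 4) ℂ), X 0 * X 2, X 2 ^ 2 * X 3,
          X 1 * X 3] :
        MvPolynomial (Fin 4) ℂ →ₐ[ℂ] MvPolynomial (Fin 4) ℂ) =
    Ideal.span {(X 0 * X 2 - X 1 ^ 2 * X 3 : MvPolynomial (Fin 4) ℂ)} := by
  apply le_antisymm
  · intro p hp
    rw [RingHom.mem_ker] at hp
    set I := Ideal.span {(X 0 * X 2 - X 1 ^ 2 * X 3 : MvPolynomial (Fin 4) ℂ)} with hI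
    have hrel : Ideal.Quotient.mkₐ ℂ I (X 0) * Ideal.Quotient.mkₐ ℂ I (X 2) =
        Ideal.Quotient.mkₐ ℂ I (X 1) ^ 2 * Ideal.Quotient.mkₐ ℂ I (X 3) := by
      rw [← map_pow, ← map_mul, ← map_mul]
      exact Ideal.Quotient.eq.2 (Ideal.subset_span rfl)
    have h := retract_aeval (fun i => Ideal.Quotient.mkₐ ℂ I (X i)) hrel p
    rw [hp, map_zero] at h
    -- evaluation at the classes of the variables is the quotient map
    have hmk : aeval (fun i => Ideal.Quotient.mkₐ ℂ I (X i)) = Ideal.Quotient.mkₐ ℂ I := by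
      ext i
      simp
    rw [hmk] at h
    exact Ideal.Quotient.eq_zero_iff_mem.1 h.symm
  · rw [Ideal.span_singleton_le_iff_mem, RingHom.mem_ker]
    simp
    ring
end

section
/- The three polynomials t₅²t₆ + t₇²t₈, t₅t₇, t₆t₈ in ℂ[t₅,t₆,t₇,t₈] are algebraically independent over ℂ; equivalently, the ℂ-algebra homomorphism ℂ[v₁,v₃,v₄] → ℂ[t₅,t₆,t₇,t₈] determined by v₁ ↦ t₅²t₆ + t₇²t₈, v₃ ↦ t₅t₇, v₄ ↦ t₆t₈ is injective. -/
/-!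
A polynomial over the infinite field `ℂ` that vanishes at every point is zero, so it is enough to
know that the polynomial map `ℂ⁴ → ℂ³`, `t ↦ (t₅²t₆ + t₇²t₈, t₅t₇, t₆t₈)`, has Zariski dense image.
It hits every `(a, b, c)` with `b ≠ 0` and `c ≠ 0`: put `t₅ = 1`, `t₇ = b`, `t₆ = s`, `t₈ = c / s`,
where `s` is a root of `s² - a s + b² c`; the root is nonzero because `b² c ≠ 0`
(`exists_preimage`). Hence if `p` lies in the kernel, `p v₃ v₄` vanishes on all of `ℂ³`, so
`p v₃ v₄ = 0` and `p = 0`.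
-/

open MvPolynomial

theorem exists_preimage (a b c : ℂ) (hb : b ≠ 0) (hc : c ≠ 0) :
    ∃ s u : ℂ, s + b ^ 2 * u = a ∧ s * u = c := by
  obtain ⟨d, hd⟩ := IsAlgClosed.exists_pow_nat_eq (a ^ 2 - 4 * (b ^ 2 * c)) (n := 2) (by norm_num)
  -- the quadratic formula; `d` is a square root of the discriminant
  have hs : ((a + d) / 2) ^ 2 - a * ((a + d) / 2) + b ^ 2 * c = 0 := by
    linear_combination hd / 4
  generalize (a + d) / 2 = s at hs
  have hs0 : s ≠ 0 := by
    rintro rfl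
    exact mul_ne_zero (pow_ne_zero 2 hb) hc (by simpa using hs)
  refine ⟨s, c / s, ?_, mul_div_cancel₀ c hs0⟩
  field_simp
  linear_combination hs

/-- The three polynomials `t₅²t₆ + t₇²t₈`, `t₅t₇`, `t₆t₈` are algebraically
independent over `ℂ`: the homomorphism `ℂ[v₁,v₃,v₄] → ℂ[t₅,t₆,t₇,t₈]` determined by
`v₁ ↦ t₅²t₆ + t₇²t₈`, `v₃ ↦ t₅t₇`, `v₄ ↦ t₆t₈` is injective. -/
theorem stmt_14 :
    Function.Injective
      (aeval ![(X 0 ^ 2 * X 1 + X 2 ^ 2 * X 3 : MvPolynomial (Fin 4) ℂ), X 0 * X 2,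
          X 1 * X 3] :
        MvPolynomial (Fin 3) ℂ →ₐ[ℂ] MvPolynomial (Fin 4) ℂ) := by
  rw [injective_iff_map_eq_zero]
  intro p hp
  have hmul : p * (X 1 * X 2) = 0 := by
    refine MvPolynomial.funext fun x => ?_
    by_cases hb : x 1 = 0
    · simp [hb]
    by_cases hc : x 2 = 0
    · simp [hc]
    obtain ⟨s, u, h1, h2⟩ := exists_preimage (x 0) (x 1) (x 2) hb hc
    have key := congrArg (aeval ![1, s, x 1, u] : MvPolynomial (Fin 4) ℂ →ₐ[ℂ] ℂ) hp
    rw [← AlgHom.comp_apply, comp_aeval, map_zero] at key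
    have hx : (fun i => (aeval ![1, s, x 1, u] : MvPolynomial (Fin 4) ℂ →ₐ[ℂ] ℂ)
        ((![(X 0 ^ 2 * X 1 + X 2 ^ 2 * X 3 : MvPolynomial (Fin 4) ℂ), X 0 * X 2,
          X 1 * X 3] : Fin 3 → MvPolynomial (Fin 4) ℂ) i)) = x := by
      funext i
      fin_cases i <;> simp [h1, h2]
    rw [hx, aeval_eq_eval] at key
    simp [show eval x p = 0 from key]
  simpa [X_ne_zero] using hmul
end
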